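/- arXiv:2303.06003 — 11 statements merged into one kernel-verified Lean document; each statement's English description precedes it below -/
import Mathlib

section
/- Let n ≥ 6 and let G = Aₙ be the alternating group on n letters. Suppose G acts on a finite set Ω and the action is binary. Then every orbit of G on Ω is either trivial (consists of a single point) or regular (the stabilizer in G of every point of the orbit is the trivial subgroup). -/
/-!
Suppose that some point stabilizer is nontrivial. A maximal set `S` through that point whose pointwise
stabilizer `K` is nontrivial has the property that `K` meets the pointwise stabilizer of any other
translate of `S` trivially. Let `a ∈ K` be nontrivial, and let `b` and `a * b⁻¹` be conjugate into
`K`, fixing translates `S₂` and `S₃` of `S` pointwise. The families `(S, S₂, S₃)` and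
`(S, S₂, a⁻¹ • S₃)` are 2-related, so binarity gives one group element mapping the first to the second,
and the trivial intersections then force `S₂ = S`, that is `b ∈ K`. This closure property is `DiffClosed`
(`IsBinary.exists_closed`).

It remains to see that a nontrivial difference closed subgroup `K` of the alternating group on at least six
points is everything (`EvenDiffClosed.eq_alternatingGroup`); then the point is fixed by the whole
group. Let `g ∈ K` have prime order `p`. For odd `p` there is a permutation `t` with small support
such that `t * g` is conjugate to `g` and `t * g ^ 2` is conjugate to a power of `g`, by even permutations,
so that `t ∈ K`. Here `t` is a three-cycle or, for `p = 3`, a double transposition (unless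
`g` is itself a three-cycle). For `p = 2`,
pairing the two-cycles of `g` into Klein four-groups produces a double transposition in `K`.
On six points a double transposition leads to a three-cycle, a three-cycle leads to all
three-cycles, and these generate the alternating group.
-/

/-- An action of `G` on `Ω` is *binary* if for every `n` and every pair of tuples
`I, J ∈ Ωⁿ`, whenever `I` and `J` are 2-related (every subtuple of length at most 2 of `I`
can be mapped to the corresponding subtuple of `J` by an element of `G`), there is a single
element of `G` mapping `I` to `J` entrywise. -/
def IsBinary (G Ω : Type*) [Group G] [MulAction G Ω] : Prop :=
  ∀ (n : ℕ) (I J : Fin n → Ω),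
    (∀ i j : Fin n, ∃ g : G, g • I i = J i ∧ g • I j = J j) →
    ∃ g : G, ∀ i, g • I i = J i

/-! ### Binary actions and difference closed subgroups -/

/-- Binarity for tuples indexed by an arbitrary finite type. -/
theorem IsBinary.exists_smul {G Ω : Type*} [Group G] [MulAction G Ω] (h : IsBinary G Ω)
    {ι : Type*} [Finite ι] (I J : ι → Ω)
    (hIJ : ∀ i j, ∃ g : G, g • I i = J i ∧ g • I j = J j) : ∃ g : G, ∀ i, g • I i = J i := by
  obtain ⟨n, ⟨e⟩⟩ := Finite.exists_equiv_fin ι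
  obtain ⟨g, hg⟩ := h n (I ∘ e.symm) (J ∘ e.symm) fun i j => hIJ _ _
  exact ⟨g, fun i => by simpa using hg (e i)⟩

/-- `K` is *difference closed*: if `a = c * b` with `a` a nontrivial element of `K`, and both factors
are conjugate to elements of `K`, then `b` already lies in `K` (hence so does `c = a * b⁻¹`). -/
def DiffClosed {G : Type*} [Group G] (K : Subgroup G) : Prop :=
  ∀ a ∈ K, a ≠ 1 → ∀ b, (∃ x, x * b * x⁻¹ ∈ K) → (∃ y, y * (a * b⁻¹) * y⁻¹ ∈ K) → b ∈ K

/-- If `a` fixes `S₁`, `b` fixes `S₂` and `a * b⁻¹` fixes `S₃` pointwise, then the concatenated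
families `(S₁, S₂, S₃)` and `(S₁, S₂, a⁻¹ • S₃)` are 2-related: the witnesses are `1`, `a⁻¹` and
`b⁻¹`. Binarity provides a single group element mapping the first family to the second. -/
theorem IsBinary.mem_fixing {G Ω : Type*} [Group G] [MulAction G Ω] [Finite Ω]
    (h : IsBinary G Ω) (S₁ S₂ S₃ : Set Ω) (a b : G) (ha : ∀ s ∈ S₁, a • s = s)
    (hb : ∀ s ∈ S₂, b • s = s) (hc : ∀ s ∈ S₃, (a * b⁻¹) • s = s) :
    ∃ z : G, (∀ s ∈ S₁, z • s = s) ∧ (∀ s ∈ S₂, z • s = s) ∧ ∀ s ∈ S₃, z • s = a⁻¹ • s := by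
  have hc' : ∀ s ∈ S₃, b⁻¹ • s = a⁻¹ • s := by
    intro s hs
    rw [eq_inv_smul_iff, smul_smul, hc s hs]
  have ha' : ∀ s ∈ S₁, a⁻¹ • s = s := fun s hs => inv_smul_eq_iff.2 (ha s hs).symm
  have hb' : ∀ s ∈ S₂, b⁻¹ • s = s := fun s hs => inv_smul_eq_iff.2 (hb s hs).symm
  obtain ⟨z, hz⟩ := h.exists_smul (ι := S₁ ⊕ S₂ ⊕ S₃)
    (Sum.elim (↑) (Sum.elim (↑) (↑))) (Sum.elim (↑) (Sum.elim (↑) (fun s => a⁻¹ • (s : Ω)))) (by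
      rintro (⟨i, hi⟩ | ⟨i, hi⟩ | ⟨i, hi⟩) (⟨j, hj⟩ | ⟨j, hj⟩ | ⟨j, hj⟩)
      · exact ⟨1, by simp⟩
      · exact ⟨1, by simp⟩
      · exact ⟨a⁻¹, by simp [ha' i hi]⟩
      · exact ⟨1, by simp⟩
      · exact ⟨1, by simp⟩
      · exact ⟨b⁻¹, by simp [hb' i hi, hc' j hj]⟩
      · exact ⟨a⁻¹, by simp [ha' j hj]⟩
      · exact ⟨b⁻¹, by simp [hb' j hj, hc' i hi]⟩
      · exact ⟨a⁻¹, by simp⟩)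
  exact ⟨z, fun s hs => hz (.inl ⟨s, hs⟩), fun s hs => hz (.inr (.inl ⟨s, hs⟩)),
    fun s hs => hz (.inr (.inr ⟨s, hs⟩))⟩

open scoped Pointwise in
/-- A nontrivial point stabilizer of a binary action contains a nontrivial difference closed
subgroup, namely the pointwise stabilizer of a maximal set `S` containing `ω` among those whose
pointwise stabilizer is nontrivial. -/
theorem IsBinary.exists_closed {G Ω : Type*} [Group G] [MulAction G Ω] [Finite Ω]
    (h : IsBinary G Ω) (ω : Ω) (hω : MulAction.stabilizer G ω ≠ ⊥) :
    ∃ K : Subgroup G, K ≠ ⊥ ∧ K ≤ MulAction.stabilizer G ω ∧ DiffClosed K := by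
  have mem_iff : ∀ (S : Set Ω) (g : G), g ∈ fixingSubgroup G S ↔ ∀ s ∈ S, g • s = s :=
    fun S g => mem_fixingSubgroup_iff G
  obtain ⟨S, ⟨hωS, hS⟩, hmax⟩ :
      ∃ S : Set Ω, Maximal (fun S => ω ∈ S ∧ fixingSubgroup G S ≠ ⊥) S := by
    apply Set.Finite.exists_maximal (Set.toFinite {S : Set Ω | ω ∈ S ∧ fixingSubgroup G S ≠ ⊥})
    refine ⟨{ω}, rfl, fun h0 => hω ?_⟩
    rw [eq_bot_iff] at h0 ⊢
    refine le_trans (fun g hg => ?_) h0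
    rw [mem_iff]
    rintro s rfl
    exact hg
  -- By maximality, distinct translates of `S` have pointwise stabilizers meeting trivially.
  have hTI : ∀ (x y c : G), c ≠ 1 → (∀ s ∈ S, c • x • s = x • s) → (∀ s ∈ S, c • y • s = y • s) →
      x • S = y • S := by
    have key : ∀ (x c : G), c ≠ 1 → (∀ s ∈ S, c • s = s) → (∀ s ∈ S, c • x • s = x • s) →
        x • S = S := by
      intro x c hc h1 h2
      have : S ∪ x • S ≤ S := hmax ⟨Or.inl hωS, fun h0 => hc ?_⟩ Set.subset_union_left
      · refine Set.eq_of_subset_of_ncard_le (Set.union_subset_iff.1 this).2 ?_ (Set.toFinite _)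
        rw [Set.ncard_smul_set]
      · rw [← Subgroup.mem_bot, ← h0, mem_iff]
        rintro s (hs | ⟨s, hs, rfl⟩)
        exacts [h1 s hs, h2 s hs]
    intro x y c hc h1 h2
    have := key (x⁻¹ * y) (x⁻¹ * c * x)
      (fun h0 => hc (by simpa [mul_assoc] using congrArg (fun u => x * u * x⁻¹) h0))
      (fun s hs => by simp [mul_smul, h1 s hs]) (fun s hs => by simp [mul_smul, h2 s hs])
    rw [mul_smul, inv_smul_eq_iff] at this
    exact this.symm
  refine ⟨fixingSubgroup G S, hS, fun g hg => (mem_iff _ _).1 hg ω hωS, ?_⟩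
  rintro a ha ha1 b ⟨x, hx⟩ ⟨y, hy⟩
  rw [mem_iff] at ha hx hy ⊢
  by_cases hb1 : b = 1
  · simp [hb1]
  have hbx : ∀ s ∈ S, b • x⁻¹ • s = x⁻¹ • s := fun s hs => by
    have := hx s hs
    rwa [mul_smul, mul_smul, ← eq_inv_smul_iff] at this
  have hcy : ∀ s ∈ S, (a * b⁻¹) • y⁻¹ • s = y⁻¹ • s := fun s hs => by
    have := hy s hs
    rwa [mul_smul, mul_smul, ← eq_inv_smul_iff] at this
  have hfin : x⁻¹ • S = S → ∀ s ∈ S, b • s = s := by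
    intro hxS s hs
    rw [← hxS] at hs
    obtain ⟨s, hs, rfl⟩ := hs
    exact hbx s hs
  obtain ⟨z, hz1, hz2, hz3⟩ := h.mem_fixing S (x⁻¹ • S) (y⁻¹ • S) a b ha
    (by rintro _ ⟨s, hs, rfl⟩; exact hbx s hs) (by rintro _ ⟨s, hs, rfl⟩; exact hcy s hs)
  apply hfin
  by_cases hz : z = 1
  -- If `z = 1`, then `a` and hence `b` fix `y⁻¹ • S` pointwise, so all three translates coincide.
  · subst hz
    have hay : ∀ s ∈ S, a • y⁻¹ • s = y⁻¹ • s := fun s hs => by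
      have := hz3 (y⁻¹ • s) ⟨s, hs, rfl⟩
      rw [one_smul, eq_inv_smul_iff] at this
      exact this
    have hby : ∀ s ∈ S, b • y⁻¹ • s = y⁻¹ • s := fun s hs => by
      have h1 : b⁻¹ • y⁻¹ • s = a⁻¹ • y⁻¹ • s := by
        rw [eq_inv_smul_iff, smul_smul, hcy s hs]
      rw [inv_smul_eq_iff.2 (hay s hs).symm] at h1
      exact (inv_smul_eq_iff.1 h1).symm
    rw [hTI x⁻¹ y⁻¹ b hb1 hbx hby]
    simpa using (hTI 1 y⁻¹ a ha1 (by simpa using ha) hay).symm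
  -- If `z ≠ 1`, then `z` itself fixes both `S` and `x⁻¹ • S` pointwise.
  · simpa using (hTI 1 x⁻¹ z hz (by simpa using hz1)
      (fun s hs => hz2 _ ⟨s, hs, rfl⟩)).symm

section
open Equiv Equiv.Perm

/-! ### Transporting permutations along embeddings -/

section
variable {α : Type*}

/-- Conjugating a permutation supported on the image of `ι` by `g` only depends on what `g` does on
that support; `γ` is a model of `g` on `β` that has to be correct there only. -/
theorem conj_viaEmbeddingHom {β : Type*} (ι : β ↪ α) (g : Perm α) (γ σ : Perm β)
    (h : ∀ i, σ i ≠ i → g (ι i) = ι (γ i)) :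
    g * viaEmbeddingHom ι σ * g⁻¹ = viaEmbeddingHom ι (γ * σ * γ⁻¹) := by
  have hR : ∀ (ρ : Perm β) y, (¬ ∃ i, ρ i ≠ i ∧ ι i = y) → viaEmbeddingHom ι ρ y = y := by
    intro ρ y hy
    rw [viaEmbeddingHom_apply]
    by_cases hy' : y ∈ Set.range ι
    · obtain ⟨i, rfl⟩ := hy'
      rw [viaEmbedding_apply]
      by_contra hne
      exact hy ⟨i, fun h0 => hne (by rw [h0]), rfl⟩
    · exact viaEmbedding_apply_of_notMem _ _ _ hy'
  rw [mul_inv_eq_iff_eq_mul]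
  ext y
  simp only [Perm.mul_apply]
  by_cases hy : ∃ i, σ i ≠ i ∧ ι i = y
  · obtain ⟨i, hi, rfl⟩ := hy
    rw [h i hi, viaEmbeddingHom_apply, viaEmbeddingHom_apply, viaEmbedding_apply,
      viaEmbedding_apply, h (σ i) (fun h0 => hi (σ.injective h0))]
    simp
  · rw [hR σ y hy, hR]
    rintro ⟨j, hj, hjy⟩
    have hj' : σ (γ⁻¹ j) ≠ γ⁻¹ j := by
      intro h0
      apply hj
      rw [Perm.mul_apply, Perm.mul_apply, h0]
      simp
    apply hy
    refine ⟨γ⁻¹ j, hj', g.injective ?_⟩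
    rw [h _ hj', ← hjy]
    simp

/-- Composing the embedding with a permutation `u` conjugates the transported permutation by `u`. -/
theorem viaEmbeddingHom_trans {β : Type*} (ι : β ↪ α) (u : Perm α) (σ : Perm β) :
    viaEmbeddingHom (ι.trans u.toEmbedding) σ = u * viaEmbeddingHom ι σ * u⁻¹ := by
  rw [eq_mul_inv_iff_mul_eq]
  ext y
  simp only [Perm.mul_apply]
  by_cases hy : y ∈ Set.range ι
  · obtain ⟨i, rfl⟩ := hy
    have := viaEmbedding_apply σ (ι.trans u.toEmbedding) i
    simp only [Function.Embedding.trans_apply, Equiv.coe_toEmbedding] at this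
    rw [viaEmbeddingHom_apply, viaEmbeddingHom_apply, this, viaEmbedding_apply]
  · rw [viaEmbeddingHom_apply, viaEmbeddingHom_apply, viaEmbedding_apply_of_notMem _ _ y hy,
      viaEmbedding_apply_of_notMem]
    rintro ⟨i, hi⟩
    exact hy ⟨i, u.injective hi⟩

end

section
variable {α : Type*} [Fintype α] [DecidableEq α]

theorem sign_viaEmbeddingHom {β : Type*} [Fintype β] [DecidableEq β] (ι : β ↪ α) (σ : Perm β) :
    sign (viaEmbeddingHom ι σ) = sign σ := by
  rw [viaEmbeddingHom_apply, viaEmbedding]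
  convert sign_extendDomain σ _

theorem cycleType_viaEmbeddingHom {β : Type*} [Fintype β] [DecidableEq β] (ι : β ↪ α)
    (σ : Perm β) : (viaEmbeddingHom ι σ).cycleType = σ.cycleType := by
  rw [viaEmbeddingHom_apply, viaEmbedding]
  convert cycleType_extendDomain _

theorem card_support_viaEmbeddingHom {β : Type*} [Fintype β] [DecidableEq β] (ι : β ↪ α)
    (σ : Perm β) : (viaEmbeddingHom ι σ).support.card = σ.support.card := by
  rw [← sum_cycleType, cycleType_viaEmbeddingHom, sum_cycleType]

end

/-! ### Cycles of a permutation -/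

section
variable {α : Type*}

theorem minimalPeriod_eq_of_pow_prime {p : ℕ} (hp : p.Prime) {g : Perm α} (hg : g ^ p = 1) {x : α}
    (hx : g x ≠ x) : Function.minimalPeriod g x = p := by
  have := Fact.mk hp
  apply Function.minimalPeriod_eq_prime
  · rw [Function.IsPeriodicPt, Function.IsFixedPt, Perm.iterate_eq_pow, hg, Perm.one_apply]
  · exact hx

/-- The first `k` points `x, g x, g² x, …` of the `g`-orbit of `x`, as an embedding of `Fin k`;
they are distinct as long as `k` does not exceed the length of the orbit. -/
def orbitEmbedding (g : Perm α) (x : α) (k : ℕ) (h : k ≤ Function.minimalPeriod g x) :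
    Fin k ↪ α where
  toFun i := g^[i] x
  inj' i j hij := Fin.ext ((Function.iterate_eq_iterate_iff_of_lt_minimalPeriod
    (i.2.trans_le h) (j.2.trans_le h)).1 hij)

/-- On a full cycle, `g` acts as the rotation of `Fin k`. -/
theorem apply_orbitEmbedding (g : Perm α) (x : α) (k : ℕ) (h : k = Function.minimalPeriod g x)
    (i : Fin k) : g (orbitEmbedding g x k h.le i) = orbitEmbedding g x k h.le (finRotate k i) := by
  cases k with
  | zero => exact i.elim0
  | succ k =>
    change g (g^[i] x) = g^[(finRotate (k + 1) i : Fin (k + 1))] x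
    have hmod : ∀ m, g^[m % (k + 1)] x = g^[m] x := fun m => by
      rw [h]
      exact Function.iterate_mod_minimalPeriod_eq
    rw [← Function.iterate_succ_apply' g, finRotate_apply, Fin.val_add, Fin.val_one',
      Nat.add_mod_mod, hmod]

theorem mem_range_orbitEmbedding {g : Perm α} {x : α} {k : ℕ} (hk : 0 < k)
    (h : k = Function.minimalPeriod g x) (i : ℕ) :
    g^[i] x ∈ Set.range (orbitEmbedding g x k h.le) := by
  refine ⟨⟨i % k, Nat.mod_lt _ hk⟩, ?_⟩
  change g^[i % k] x = g^[i] x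
  rw [h, Function.iterate_mod_minimalPeriod_eq]

/-- Two different nontrivial cycles of an element of prime order `p`, as an embedding of two copies
of `Fin p` on which `g` acts by rotation. -/
theorem exists_embedding_two_orbits {p : ℕ} (hp : p.Prime) {g : Perm α} (hg : g ^ p = 1) {x y : α}
    (hx : g x ≠ x) (hy : g y ≠ y) (hxy : ∀ i : ℕ, g^[i] x ≠ y) :
    ∃ ι : Fin p ⊕ Fin p ↪ α, ∀ i, g (ι i) = ι (Equiv.sumCongr (finRotate p) (finRotate p) i) := by
  have hx' := (minimalPeriod_eq_of_pow_prime hp hg hx).symm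
  have hy' := (minimalPeriod_eq_of_pow_prime hp hg hy).symm
  refine ⟨⟨Sum.elim (orbitEmbedding g x p hx'.le) (orbitEmbedding g y p hy'.le), ?_⟩, ?_⟩
  · refine Function.Injective.sumElim (orbitEmbedding g x p hx'.le).injective
      (orbitEmbedding g y p hy'.le).injective fun i j hij => hxy (p - j + i) ?_
    change g^[i] x = g^[j] y at hij
    rw [Function.iterate_add_apply, hij, ← Function.iterate_add_apply, Nat.sub_add_cancel j.2.le,
      Perm.iterate_eq_pow, hg, Perm.one_apply]
  · rintro (i | i)
    · exact apply_orbitEmbedding g x p hx' i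
    · exact apply_orbitEmbedding g y p hy' i

end

/-! ### Difference closed subgroups of the alternating group -/

/-- Being a difference closed subgroup of the alternating group, phrased inside the full symmetric
group: conjugators are required to be even. -/
structure EvenDiffClosed {α : Type*} [Fintype α] [DecidableEq α] (L : Subgroup (Perm α)) :
    Prop where
  le : L ≤ alternatingGroup α
  mem : ∀ a ∈ L, a ≠ 1 → ∀ b, (∃ x : Perm α, sign x = 1 ∧ x * b * x⁻¹ ∈ L) →
    (∃ y : Perm α, sign y = 1 ∧ y * (a * b⁻¹) * y⁻¹ ∈ L) → b ∈ L

section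
variable {α : Type*} [Fintype α] [DecidableEq α] {L : Subgroup (Perm α)}

/-- The criterion used for elements of odd order. Here `a := g` and `b := (t * g)⁻¹`, so that
`a * b⁻¹ = g * t * g`, which is conjugate under `g` to `t * g ^ 2`. -/
theorem EvenDiffClosed.mem_of_conj (hL : EvenDiffClosed L) {g t s s' : Perm α} (hg : g ∈ L)
    (hg1 : g ≠ 1) (hs : sign s = 1) (hs' : sign s' = 1) (a : ℕ) (h1 : t * g = s * g * s⁻¹)
    (h2 : t * g ^ 2 = s' * g ^ a * s'⁻¹) : t ∈ L := by
  have : (t * g)⁻¹ ∈ L := by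
    refine hL.mem g hg hg1 _ ⟨s⁻¹, by simpa using hs, ?_⟩ ⟨s'⁻¹ * g⁻¹, ?_, ?_⟩
    · rw [h1]
      simpa [mul_assoc] using hg
    · rw [Perm.sign_mul, sign_inv, sign_inv, hs', mem_alternatingGroup.1 (hL.le hg), one_mul]
    · have : s'⁻¹ * g⁻¹ * (g * (t * g)⁻¹⁻¹) * (s'⁻¹ * g⁻¹)⁻¹ = s'⁻¹ * (t * g ^ 2) * s' := by
        rw [pow_two]
        group
      rw [this, h2]
      simpa [mul_assoc] using pow_mem hg a
  simpa using mul_mem (inv_mem this) (inv_mem hg)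

/-! ### From one three-cycle to the alternating group -/

theorem IsThreeCycle.exists_eq_swap_mul_swap {t : Perm α} (ht : t.IsThreeCycle) :
    ∃ x y z, x ≠ y ∧ x ≠ z ∧ y ≠ z ∧ t = swap x y * swap x z := by
  obtain ⟨a, ha⟩ : t.support.Nonempty := by
    rw [← Finset.card_pos, ht.card_support]
    norm_num
  have h1 := ht.nodup_iff_mem_support.2 ha
  have h2 := ht.eq_swap_mul_swap_iff_mem_support.2 ha
  simp only [List.nodup_cons, List.mem_cons, List.not_mem_nil, or_false, not_or] at h1
  exact ⟨t a, a, t (t a), Ne.symm h1.1.1, h1.2.1, h1.1.2, by rwa [swap_comm (t a) a]⟩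

/-- A three-cycle in `L` can be replaced by another one sharing two points with it, because the
quotient of the two is again a three-cycle or trivial. Repeating this yields all three-cycles. -/
theorem EvenDiffClosed.alternating_le_of_threeCycle (hL : EvenDiffClosed L)
    (h5 : 5 ≤ Fintype.card α) {t : Perm α} (ht : t ∈ L) (ht3 : t.IsThreeCycle) :
    alternatingGroup α ≤ L := by
  have hconj : ∀ b : Perm α, b.IsThreeCycle → ∃ x : Perm α, sign x = 1 ∧ x * b * x⁻¹ ∈ L := by
    intro b hb
    obtain ⟨x, hx⟩ := isConj_iff.1 (alternatingGroup.isThreeCycle_isConj (by simpa using h5)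
      (σ := ⟨b, hb.mem_alternatingGroup⟩) (τ := ⟨t, ht3.mem_alternatingGroup⟩) hb ht3)
    refine ⟨x, x.2, ?_⟩
    have := congrArg Subtype.val hx
    simp only [Subgroup.coe_mul, Subgroup.coe_inv] at this
    rwa [this]
  have step : ∀ x y z w : α, x ≠ y → x ≠ z → y ≠ z → x ≠ w → y ≠ w →
      swap x y * swap x z ∈ L → swap x y * swap x w ∈ L := by
    intro x y z w hxy hxz hyz hxw hyw h
    by_cases hzw : z = w
    · rwa [← hzw]
    refine hL.mem _ h (isThreeCycle_swap_mul_swap_same hxy hxz hyz).ne_one _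
      (hconj _ (isThreeCycle_swap_mul_swap_same hxy hxw hyw)) (hconj _ ?_)
    have := isThreeCycle_swap_mul_swap_same hxz hxw hzw
    rw [← card_support_eq_three_iff] at this ⊢
    have h' : swap x y * swap x z * (swap x y * swap x w)⁻¹ =
        swap x y * (swap x z * swap x w) * (swap x y)⁻¹ := by
      simp [mul_assoc]
    rw [h', card_support_conj, this]
  have hinv : ∀ x y z : α, swap x y * swap x z ∈ L → swap x z * swap x y ∈ L := by
    intro x y z h
    simpa using inv_mem h
  have hrot : ∀ x y z : α, x ≠ y → x ≠ z → y ≠ z → swap x y * swap x z ∈ L →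
      swap y x * swap y z ∈ L := by
    intro x y z hxy hxz hyz h
    have : swap y x * swap y z = swap x z * swap x y := by
      ext v
      simp only [Perm.mul_apply, swap_apply_def]
      split_ifs <;> simp_all
    rw [this]
    exact hinv x y z h
  -- `Q x y`: all three-cycles of the form `(x y)(x w)` lie in `L`.
  let Q : α → α → Prop := fun x y => ∀ w, x ≠ w → y ≠ w → swap x y * swap x w ∈ L
  have hQ1 : ∀ x y, x ≠ y → Q x y → Q y x := fun x y hxy h w hw hw' =>
    hrot x y w hxy hw' hw (h w hw' hw)
  have hQ2 : ∀ x y z, x ≠ y → x ≠ z → Q x y → Q x z := by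
    intro x y z hxy hxz h w hxw hzw
    by_cases hyz : y = z
    · subst hyz
      exact h w hxw hzw
    · exact step x z y w hxz hxy (Ne.symm hyz) hxw hzw (hinv _ _ _ (h z hxz hyz))
  obtain ⟨x, y, hxy, hQ⟩ : ∃ x y, x ≠ y ∧ Q x y := by
    obtain ⟨x, y, z, hxy, hxz, hyz, rfl⟩ := IsThreeCycle.exists_eq_swap_mul_swap ht3
    exact ⟨x, y, hxy, fun w hxw hyw => step x y z w hxy hxz hyz hxw hyw ht⟩
  have hall : ∀ a b c, a ≠ b → a ≠ c → b ≠ c → swap a b * swap a c ∈ L := by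
    intro a b c hab hac hbc
    refine (?_ : Q a b) c hac hbc
    by_cases hax : a = x
    · subst hax
      exact hQ2 a y b hxy hab hQ
    · exact hQ2 a x b hax hab (hQ1 x a (Ne.symm hax) (hQ2 x y a hxy (Ne.symm hax) hQ))
  rw [← closure_three_cycles_eq_alternating, Subgroup.closure_le]
  intro σ hσ
  obtain ⟨x, y, z, hxy, hxz, hyz, rfl⟩ := IsThreeCycle.exists_eq_swap_mul_swap hσ
  exact hall x y z hxy hxz hyz

/-! ### Involutions -/

/-- Involutions with equally many moved points are conjugate by an even permutation, since the
centralizer of a nontrivial involution contains a transposition. -/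
theorem exists_even_conj_of_involutions {g b : Perm α} (hg : g ^ 2 = 1) (hb : b ^ 2 = 1)
    (hg1 : g ≠ 1) (hcard : b.support.card = g.support.card) :
    ∃ x : Perm α, sign x = 1 ∧ x * b * x⁻¹ = g := by
  have hct : b.cycleType = g.cycleType := by
    have h1 := cycleType_of_pow_prime_eq_one hg
    have h2 := cycleType_of_pow_prime_eq_one hb
    have h3 := sum_cycleType g
    have h4 := sum_cycleType b
    rw [h1, Multiset.sum_replicate] at h3
    rw [h2, Multiset.sum_replicate] at h4
    rw [h1, h2]
    congr 1
    simp only [smul_eq_mul] at h3 h4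
    omega
  obtain ⟨x, hx⟩ := isConj_iff.1 (isConj_of_cycleType_eq hct)
  obtain ⟨a, ha⟩ : ∃ a, g a ≠ a := by
    by_contra! h
    exact hg1 (Equiv.ext h)
  rcases Int.units_eq_one_or (sign x) with h | h
  · exact ⟨x, h, hx⟩
  -- The transposition `(a, g a)` is odd and centralizes `g`.
  · refine ⟨swap a (g a) * x, by rw [Perm.sign_mul, h, sign_swap (Ne.symm ha)]; rfl, ?_⟩
    have hga : g (g a) = a := by
      rw [← Perm.mul_apply, ← pow_two, hg, Perm.one_apply]
    have hcomm : swap a (g a) * g = g * swap a (g a) := by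
      rw [mul_swap_eq_swap_mul, hga, swap_comm]
    calc swap a (g a) * x * b * (swap a (g a) * x)⁻¹
        = swap a (g a) * (x * b * x⁻¹) * (swap a (g a))⁻¹ := by group
      _ = g := by rw [hx, hcomm, mul_inv_cancel_right]

/-- If `g ∈ L`, `b` and `g * b` are involutions with equally many moved points, then `b ∈ L`. -/
theorem EvenDiffClosed.mem_of_involutions (hL : EvenDiffClosed L) {g b : Perm α} (hgL : g ∈ L)
    (hg : g ^ 2 = 1) (hg1 : g ≠ 1) (hb : b ^ 2 = 1) (hbc : b.support.card = g.support.card)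
    (hgb : (g * b) ^ 2 = 1) (hgbc : (g * b).support.card = g.support.card) : b ∈ L := by
  have hb' : b⁻¹ = b := by rw [inv_eq_iff_mul_eq_one, ← pow_two, hb]
  obtain ⟨x, hx, hx'⟩ := exists_even_conj_of_involutions hg hb hg1 hbc
  obtain ⟨y, hy, hy'⟩ := exists_even_conj_of_involutions hg hgb hg1 hgbc
  exact hL.mem g hgL hg1 b ⟨x, hx, hx' ▸ hgL⟩ ⟨y, hy, by rw [hb', hy']; exact hgL⟩

/-- Every involution `t` looks like a given model involution `τ` with the same number of moved points,
provided that there is room to embed the model. -/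
theorem exists_viaEmbeddingHom_eq_involution {β : Type*} [Fintype β] [DecidableEq β]
    (hβ : Fintype.card β ≤ Fintype.card α) {t : Perm α} (ht : t ^ 2 = 1) (ht1 : t ≠ 1)
    {τ : Perm β} (hτ : τ ^ 2 = 1) (hc : τ.support.card = t.support.card) :
    ∃ ι : β ↪ α, viaEmbeddingHom ι τ = t := by
  obtain ⟨ι₀⟩ : Nonempty (β ↪ α) := Function.Embedding.nonempty_of_card_le hβ
  obtain ⟨u, -, hu⟩ := exists_even_conj_of_involutions (b := viaEmbeddingHom ι₀ τ) ht
    (by rw [← map_pow, hτ, map_one]) ht1 (by rw [card_support_viaEmbeddingHom, hc])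
  exact ⟨ι₀.trans u.toEmbedding, by rw [viaEmbeddingHom_trans, hu]⟩

theorem EvenDiffClosed.viaEmbeddingHom_mem_of_involutions (hL : EvenDiffClosed L)
    {β : Type*} [Fintype β] [DecidableEq β] (ι : β ↪ α) {τ₁ τ₂ : Perm β}
    (h : viaEmbeddingHom ι τ₁ ∈ L) (h1 : τ₁ ≠ 1)
    (h2 : τ₁ ^ 2 = 1 ∧ τ₂ ^ 2 = 1 ∧ (τ₁ * τ₂) ^ 2 = 1)
    (hc : τ₂.support.card = τ₁.support.card ∧ (τ₁ * τ₂).support.card = τ₁.support.card) :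
    viaEmbeddingHom ι τ₂ ∈ L := by
  obtain ⟨h2, h3, h4⟩ := h2
  refine hL.mem_of_involutions h (by rw [← map_pow, h2, map_one]) ?_
    (by rw [← map_pow, h3, map_one]) ?_ (by rw [← map_mul, ← map_pow, h4, map_one]) ?_
  · rwa [Ne, map_eq_one_iff _ (viaEmbeddingHom_injective ι)]
  · rw [card_support_viaEmbeddingHom, card_support_viaEmbeddingHom, hc.1]
  · rw [← map_mul, card_support_viaEmbeddingHom, card_support_viaEmbeddingHom, hc.2]

/-- On six points, the double transpositions `(01)(23)`, `(01)(45)` and `(01)(23)`, `(02)(13)`,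
`(02)(45)` are linked by involutions of the same type; the product of `(01)(45)` and `(02)(45)` is a
three-cycle. -/
theorem EvenDiffClosed.exists_threeCycle_of_doubleTransposition (hL : EvenDiffClosed L)
    (h6 : 6 ≤ Fintype.card α) {t : Perm α} (ht : t ∈ L) (ht2 : t ^ 2 = 1)
    (ht4 : t.support.card = 4) : ∃ c ∈ L, c.IsThreeCycle := by
  have ht1 : t ≠ 1 := by
    rintro rfl
    simp at ht4
  obtain ⟨ι, hι⟩ := exists_viaEmbeddingHom_eq_involution (β := Fin 6) (by simpa using h6) ht2 ht1
    (τ := swap 0 1 * swap 2 3) (by decide) (by rw [ht4]; decide)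
  have h1 : viaEmbeddingHom ι (swap 0 1 * swap 2 3) ∈ L := hι ▸ ht
  have h2 := hL.viaEmbeddingHom_mem_of_involutions ι (τ₂ := swap 0 1 * swap 4 5) h1
    (by decide) (by decide) (by decide)
  have h3 := hL.viaEmbeddingHom_mem_of_involutions ι (τ₂ := swap 0 2 * swap 1 3) h1
    (by decide) (by decide) (by decide)
  have h4 := hL.viaEmbeddingHom_mem_of_involutions ι (τ₂ := swap 0 2 * swap 4 5) h3
    (by decide) (by decide) (by decide)
  have h5 := mul_mem h2 h4
  rw [← map_mul] at h5
  refine ⟨_, h5, ?_⟩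
  rw [← card_support_eq_three_iff, card_support_viaEmbeddingHom]
  decide

/-- The permutation of `m` disjoint blocks of size four that acts on the `i`-th block by `e i`. -/
def blockPerm {m : ℕ} (e : Fin m → Perm (Bool × Bool)) : Perm (Fin m × Bool × Bool) :=
  Equiv.prodCongrRight e

theorem blockPerm_mul {m : ℕ} (e e' : Fin m → Perm (Bool × Bool)) :
    blockPerm e * blockPerm e' = blockPerm (e * e') := rfl

theorem blockPerm_sq {m : ℕ} {e : Fin m → Perm (Bool × Bool)} (he : ∀ i, e i ^ 2 = 1) :
    blockPerm e ^ 2 = 1 := by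
  rw [pow_two, blockPerm_mul, ← pow_two, show e ^ 2 = 1 from funext he]
  rfl

theorem card_support_blockPerm {m : ℕ} {e : Fin m → Perm (Bool × Bool)}
    (he : ∀ i v, e i v ≠ v) : (blockPerm e).support.card = m * 4 := by
  have : (blockPerm e).support = Finset.univ := by
    ext ⟨i, v⟩
    simpa [blockPerm] using he i v
  simp [this]

/-- The number of two-cycles of an even involution `g` is even. Grouping them in pairs, `g` acts on
`m` blocks of four points as the translation `a` of the Klein four-group `{1, a, b, a * b}`. Any choice
of `b` or `a * b` on each block gives an involution in `L`; two such choices differing on a single block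
multiply to `a` on that block and the identity elsewhere. -/
theorem EvenDiffClosed.exists_doubleTransposition (hL : EvenDiffClosed L) {g : Perm α}
    (hgL : g ∈ L) (hg : g ^ 2 = 1) (hg1 : g ≠ 1) :
    ∃ t ∈ L, t ^ 2 = 1 ∧ t.support.card = 4 := by
  obtain ⟨m, hm⟩ : ∃ m, g.support.card = m * 4 := by
    have h1 := cycleType_of_pow_prime_eq_one hg
    have h2 := sum_cycleType g
    have h3 := sign_of_cycleType g
    rw [mem_alternatingGroup.1 (hL.le hgL), h2] at h3
    rw [h1, Multiset.sum_replicate, smul_eq_mul] at h2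
    rw [← h2] at h3
    have h4 := (neg_one_pow_eq_one_iff_even (R := ℤ) (by norm_num)).1
      (by simpa using (congrArg Units.val h3).symm)
    obtain ⟨r, hr⟩ : Even g.cycleType.card := by
      rw [Nat.even_add] at h4
      exact h4.1 (even_two.mul_left _)
    exact ⟨r, by omega⟩
  match m, hm with
  | 0, hm => simp at hm; exact absurd hm hg1
  | 1, hm => exact ⟨g, hgL, hg, hm⟩
  | m + 2, hm =>
    let a : Perm (Bool × Bool) := Equiv.prodCongr Equiv.boolNot (Equiv.refl _)
    let b : Perm (Bool × Bool) := Equiv.prodCongr (Equiv.refl _) Equiv.boolNot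
    have ha : a ^ 2 = 1 ∧ ∀ v, a v ≠ v := by decide
    have hb : b ^ 2 = 1 ∧ ∀ v, b v ≠ v := by decide
    have hab : (a * b) ^ 2 = 1 ∧ ∀ v, (a * b) v ≠ v := by decide
    have haab : a * (a * b) = b := by decide
    let e₀ : Fin (m + 2) → Perm (Bool × Bool) := fun _ => a
    have hcard : ∀ e : Fin (m + 2) → Perm (Bool × Bool), (∀ i v, e i v ≠ v) →
        (blockPerm e).support.card = (blockPerm e₀).support.card := fun e he => by
      rw [card_support_blockPerm he, card_support_blockPerm fun _ => ha.2]
    obtain ⟨ι, hι⟩ := exists_viaEmbeddingHom_eq_involution (β := Fin (m + 2) × Bool × Bool)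
      (by simpa [← hm] using g.support.card_le_univ) hg hg1
      (τ := blockPerm e₀) (blockPerm_sq fun _ => ha.1)
      (by rw [card_support_blockPerm fun _ => ha.2, hm])
    have key : ∀ e : Fin (m + 2) → Perm (Bool × Bool), (∀ i, e i = b ∨ e i = a * b) →
        viaEmbeddingHom ι (blockPerm e) ∈ L := by
      intro e he
      have he' : ∀ i, (e i ^ 2 = 1 ∧ ∀ v, e i v ≠ v) ∧
          ((a * e i) ^ 2 = 1 ∧ ∀ v, (a * e i) v ≠ v) := by
        intro i
        rcases he i with h | h <;> rw [h]
        · exact ⟨hb, hab⟩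
        · rw [haab]
          exact ⟨hab, hb⟩
      refine hL.viaEmbeddingHom_mem_of_involutions ι (hι ▸ hgL) ?_
        ⟨blockPerm_sq fun _ => ha.1, blockPerm_sq fun i => (he' i).1.1, ?_⟩
        ⟨hcard e fun i => (he' i).1.2, ?_⟩
      · intro h0
        rw [h0, map_one] at hι
        exact hg1 hι.symm
      · rw [blockPerm_mul]
        exact blockPerm_sq fun i => (he' i).2.1
      · rw [blockPerm_mul]
        exact hcard _ fun i => (he' i).2.2
    have h := mul_mem (key (fun _ => b) fun _ => Or.inl rfl)
      (key (fun i => if i = 0 then a * b else b) fun i => by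
        by_cases hi : i = 0 <;> simp [hi])
    rw [← map_mul, blockPerm_mul] at h
    have hbab : b * (a * b) = a := by decide
    have hbb : b * b = 1 := by decide
    have he : (fun _ => b) * (fun i : Fin (m + 2) => if i = 0 then a * b else b) =
        fun i => if i = 0 then a else 1 := by
      funext i
      by_cases hi : i = 0 <;> simp [hi, hbab, hbb]
    rw [he] at h
    refine ⟨_, h, ?_, ?_⟩
    · rw [← map_pow, blockPerm_sq, map_one]
      intro i
      by_cases hi : i = 0 <;> simp [hi, ha.1]
    · rw [card_support_viaEmbeddingHom]
      have : (blockPerm fun i : Fin (m + 2) => if i = 0 then a else 1).support =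
          ({0} : Finset (Fin (m + 2))) ×ˢ Finset.univ := by
        ext ⟨i, v⟩
        by_cases hi : i = 0
        · subst hi
          simpa [blockPerm] using ha.2 v
        · simp [blockPerm, hi, Ne.symm hi]
      simp [this]

/-! ### Elements of odd prime order -/

/-- Local form of `EvenDiffClosed.mem_of_conj`: the two conjugacy identities are verified in a finite
model `β`, on which `γ` imitates `g` wherever the conjugators `σ` and `σ'` act. -/
theorem EvenDiffClosed.viaEmbeddingHom_mem (hL : EvenDiffClosed L) {g : Perm α} (hgL : g ∈ L)
    (hg1 : g ≠ 1) {β : Type*} [Fintype β] [DecidableEq β] (ι : β ↪ α) (γ τ σ σ' : Perm β)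
    (hσ : sign σ = 1) (hσ' : sign σ' = 1)
    (h1 : ∀ i, σ i ≠ i → g (ι i) = ι (γ i)) (h2 : ∀ i, σ' i ≠ i → g (g (ι i)) = ι (γ (γ i)))
    (hτ : τ * γ = σ * γ * σ⁻¹) (hτ' : τ * γ ^ 2 = σ' * γ ^ 2 * σ'⁻¹) :
    viaEmbeddingHom ι τ ∈ L := by
  refine hL.mem_of_conj hgL hg1 (s := viaEmbeddingHom ι σ) (s' := viaEmbeddingHom ι σ')
    (by rwa [sign_viaEmbeddingHom]) (by rwa [sign_viaEmbeddingHom]) 2 ?_ ?_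
  · have := conj_viaEmbeddingHom ι g γ σ⁻¹ fun i hi => h1 i fun h0 =>
      hi (by rw [Perm.inv_eq_iff_eq, h0])
    rw [← eq_mul_inv_iff_mul_eq, mul_assoc, mul_assoc, ← mul_assoc g, ← map_inv, this, ← map_mul]
    congr 1
    rw [eq_mul_inv_of_mul_eq hτ]
    group
  · have := conj_viaEmbeddingHom ι (g ^ 2) (γ ^ 2) σ'⁻¹ fun i hi => by
      rw [pow_two, pow_two, Perm.mul_apply, Perm.mul_apply]
      exact h2 i fun h0 => hi (by rw [Perm.inv_eq_iff_eq, h0])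
    rw [← eq_mul_inv_iff_mul_eq, mul_assoc, mul_assoc, ← mul_assoc (g ^ 2), ← map_inv, this,
      ← map_mul]
    congr 1
    rw [eq_mul_inv_of_mul_eq hτ']
    group

/-- Seven consecutive points of a cycle suffice: the conjugators move only points `i ≤ 5` and only
points `i ≤ 4`, respectively, so that `i + 1` and `i + 2` stay within the seven points. -/
theorem EvenDiffClosed.exists_threeCycle_of_seven_le (hL : EvenDiffClosed L) {g : Perm α}
    (hgL : g ∈ L) {x : α} (hx : 7 ≤ Function.minimalPeriod g x) : ∃ c ∈ L, c.IsThreeCycle := by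
  have hg1 : g ≠ 1 := by
    rintro rfl
    rw [Perm.coe_one, Function.minimalPeriod_id] at hx
    omega
  refine ⟨_, hL.viaEmbeddingHom_mem hgL hg1 (orbitEmbedding g x 7 hx) (finRotate 7)
    (swap 0 2 * swap 2 6) (swap 0 2 * swap 2 4 * (swap 1 3 * swap 3 5)) (swap 0 2 * swap 2 4)
    (by decide) (by decide) ?_ ?_ (by decide) (by decide), ?_⟩
  · intro i hi
    fin_cases i <;> first | rfl | exact absurd (by decide) hi
  · intro i hi
    fin_cases i <;> first | rfl | exact absurd (by decide) hi
  · rw [← card_support_eq_three_iff, card_support_viaEmbeddingHom]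
    decide

/-- The case of order five. The identity for `g ^ 2` has the odd conjugator `(2 4)` within a single
cycle. A second five-cycle allows to correct the parity by the odd permutation exchanging both cycles,
which centralizes `g`. For a single five-cycle, `t * g ^ 2` is instead conjugate to `g` itself by an
even permutation. -/
theorem EvenDiffClosed.exists_threeCycle_of_five (hL : EvenDiffClosed L) {g : Perm α}
    (hgL : g ∈ L) (hg1 : g ≠ 1) (hg : g ^ 5 = 1) : ∃ c ∈ L, c.IsThreeCycle := by
  obtain ⟨x, hx⟩ : ∃ x, g x ≠ x := by
    by_contra! h
    exact hg1 (Equiv.ext h)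
  by_cases hy : ∃ y, g y ≠ y ∧ ∀ i : ℕ, g^[i] x ≠ y
  · obtain ⟨y, hy, hxy⟩ := hy
    obtain ⟨ι, hι⟩ := exists_embedding_two_orbits Nat.prime_five hg hx hy hxy
    refine ⟨_, hL.viaEmbeddingHom_mem hgL hg1 ι _
      (swap (.inl 1) (.inl 2) * swap (.inl 2) (.inl 4))
      (swap (.inl 1) (.inl 2) * swap (.inl 2) (.inl 3))
      (swap (.inl 2) (.inl 4) * Equiv.sumComm _ _) (by decide) ?_ (fun i _ => hι i)
      (fun i _ => by rw [hι, hι]) (by decide) (by decide), ?_⟩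
    · decide
    · rw [← card_support_eq_three_iff, card_support_viaEmbeddingHom]
      decide
  · push Not at hy
    have hx' := (minimalPeriod_eq_of_pow_prime Nat.prime_five hg hx).symm
    let ι := orbitEmbedding g x 5 hx'.le
    have hgι : g = viaEmbeddingHom ι (finRotate 5) := by
      ext y
      rw [viaEmbeddingHom_apply]
      by_cases h : y ∈ Set.range ι
      · obtain ⟨i, rfl⟩ := h
        rw [viaEmbedding_apply, apply_orbitEmbedding g x 5 hx' i]
      · rw [viaEmbedding_apply_of_notMem _ _ _ h]
        by_contra hgy
        obtain ⟨i, rfl⟩ := hy y hgy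
        exact h (mem_range_orbitEmbedding (by norm_num) hx' i)
    refine ⟨viaEmbeddingHom ι (swap 1 2 * swap 2 4), hL.mem_of_conj hgL hg1
      (s := viaEmbeddingHom ι (swap 1 2 * swap 2 3)) (s' := viaEmbeddingHom ι (swap 1 4 * swap 4 3))
      ?_ ?_ 1 ?_ ?_, ?_⟩
    · rw [sign_viaEmbeddingHom]
      decide
    · rw [sign_viaEmbeddingHom]
      decide
    · rw [hgι, ← map_inv, ← map_mul, ← map_mul, ← map_mul]
      congr 1
      decide
    · rw [hgι, ← map_inv, ← map_pow, ← map_pow, ← map_mul, ← map_mul, ← map_mul]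
      congr 1
      decide
    · rw [← card_support_eq_three_iff, card_support_viaEmbeddingHom]
      decide

/-- The case of order three. With at least two three-cycles, a double transposition is obtained from
the local identity on these six points; otherwise `g` is itself a three-cycle. -/
theorem EvenDiffClosed.exists_threeCycle_of_three (hL : EvenDiffClosed L)
    (h6 : 6 ≤ Fintype.card α) {g : Perm α}
    (hgL : g ∈ L) (hg1 : g ≠ 1) (hg : g ^ 3 = 1) : ∃ c ∈ L, c.IsThreeCycle := by
  obtain ⟨x, hx⟩ : ∃ x, g x ≠ x := by
    by_contra! h
    exact hg1 (Equiv.ext h)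
  by_cases hy : ∃ y, g y ≠ y ∧ ∀ i : ℕ, g^[i] x ≠ y
  · obtain ⟨y, hy, hxy⟩ := hy
    obtain ⟨ι, hι⟩ := exists_embedding_two_orbits Nat.prime_three hg hx hy hxy
    refine hL.exists_threeCycle_of_doubleTransposition h6 (hL.viaEmbeddingHom_mem hgL hg1 ι _
      (swap (.inl 0) (.inr 2) * swap (.inl 1) (.inr 0))
      (swap (.inl 1) (.inr 0) * swap (.inl 2) (.inr 1))
      (swap (.inl 0) (.inr 2) * swap (.inl 2) (.inr 1)) (by decide) (by decide) (fun i _ => hι i)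
      (fun i _ => by rw [hι, hι]) (by decide) (by decide)) ?_ ?_
    · rw [← map_pow, map_eq_one_iff _ (viaEmbeddingHom_injective ι)]
      decide
    · rw [card_support_viaEmbeddingHom]
      decide
  · push Not at hy
    have hx' := (minimalPeriod_eq_of_pow_prime Nat.prime_three hg hx).symm
    refine ⟨g, hgL, ?_⟩
    rw [← card_support_eq_three_iff]
    have : g.support = Finset.univ.map (orbitEmbedding g x 3 hx'.le) := by
      ext y
      rw [mem_support, Finset.mem_map]
      constructor
      · intro h
        obtain ⟨i, rfl⟩ := hy y h
        obtain ⟨j, hj⟩ := mem_range_orbitEmbedding (by norm_num) hx' i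
        exact ⟨j, Finset.mem_univ j, hj⟩
      · rintro ⟨i, -, rfl⟩
        rw [apply_orbitEmbedding g x 3 hx', Ne, (orbitEmbedding g x 3 hx'.le).injective.eq_iff]
        revert i
        decide
    simp [this]

/-! ### Conclusion -/

/-- The group-theoretic heart: a nontrivial difference closed subgroup of the alternating group on at
least six points is the whole group. The prime order of some element decides which case applies. -/
theorem EvenDiffClosed.eq_alternatingGroup (hL : EvenDiffClosed L) (h6 : 6 ≤ Fintype.card α)
    (hne : L ≠ ⊥) : L = alternatingGroup α := by
  refine le_antisymm hL.le ?_
  obtain ⟨p, hp, hpd⟩ := Nat.exists_prime_and_dvd (n := Nat.card L)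
    (by rwa [Ne, Subgroup.card_eq_one])
  have := Fact.mk hp
  obtain ⟨⟨g, hgL⟩, hg⟩ := exists_prime_orderOf_dvd_card' p hpd
  rw [Subgroup.orderOf_mk] at hg
  have hgp : g ^ p = 1 := hg ▸ pow_orderOf_eq_one g
  have hg1 : g ≠ 1 := by
    rintro rfl
    rw [orderOf_one] at hg
    exact hp.one_lt.ne hg
  obtain ⟨c, hc, hc3⟩ : ∃ c ∈ L, c.IsThreeCycle := by
    by_cases h7 : 7 ≤ p
    · obtain ⟨x, hx⟩ : ∃ x, g x ≠ x := by
        by_contra! h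
        exact hg1 (Equiv.ext h)
      exact hL.exists_threeCycle_of_seven_le hgL
        (h7.trans (minimalPeriod_eq_of_pow_prime hp hgp hx).ge)
    · have h2 := hp.two_le
      interval_cases p
      · obtain ⟨t, ht, ht2, ht4⟩ := hL.exists_doubleTransposition hgL hgp hg1
        exact hL.exists_threeCycle_of_doubleTransposition h6 ht ht2 ht4
      · exact hL.exists_threeCycle_of_three h6 hgL hg1 hgp
      · norm_num at hp
      · exact hL.exists_threeCycle_of_five hgL hg1 hgp
      · norm_num at hp
  exact hL.alternating_le_of_threeCycle (by omega) hc hc3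

theorem DiffClosed.map_subtype {K : Subgroup (alternatingGroup α)} (hK : DiffClosed K) :
    EvenDiffClosed (K.map (alternatingGroup α).subtype) := by
  have hle : K.map (alternatingGroup α).subtype ≤ alternatingGroup α := Subgroup.map_subtype_le K
  refine ⟨hle, ?_⟩
  rintro _ ⟨a, ha, rfl⟩ ha1 b ⟨x, hx, hxb⟩ ⟨y, hy, hyb⟩
  have hb : b ∈ alternatingGroup α := by
    have := mem_alternatingGroup.1 (hle hxb)
    simpa [mem_alternatingGroup, hx] using this
  have key : ∀ u : alternatingGroup α,
      (u : Perm α) ∈ K.map (alternatingGroup α).subtype → u ∈ K := by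
    rintro u ⟨v, hv, hvu⟩
    rwa [← Subtype.ext hvu]
  refine ⟨⟨b, hb⟩, hK a ha (fun h => ha1 (by rw [h, map_one])) ⟨b, hb⟩
    ⟨⟨x, hx⟩, key _ hxb⟩ ⟨⟨y, hy⟩, key _ hyb⟩, rfl⟩

theorem DiffClosed.eq_top {K : Subgroup (alternatingGroup α)} (hK : DiffClosed K)
    (h6 : 6 ≤ Fintype.card α) (hne : K ≠ ⊥) : K = ⊤ := by
  have h := hK.map_subtype.eq_alternatingGroup h6 (by
    rwa [Ne, Subgroup.map_eq_bot_iff_of_injective _ (Subgroup.subtype_injective _)])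
  apply Subgroup.map_injective (Subgroup.subtype_injective (alternatingGroup α))
  rw [h, ← MonoidHom.range_eq_map, Subgroup.range_subtype]

end

end

/-- Theorem (binary actions of alternating groups): if `n ≥ 6` and `Aₙ` acts binarily on a
finite set `Ω`, then every orbit is a single point, or the stabilizer of every point of the
orbit is trivial. -/
theorem binary_action_alternatingGroup_orbit_trivial_or_regular
    (n : ℕ) (hn : 6 ≤ n) (Ω : Type*) [Fintype Ω]
    [MulAction (alternatingGroup (Fin n)) Ω]
    (hbin : IsBinary (alternatingGroup (Fin n)) Ω) (ω : Ω) :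
    MulAction.orbit (alternatingGroup (Fin n)) ω = {ω} ∨
      ∀ x ∈ MulAction.orbit (alternatingGroup (Fin n)) ω,
        MulAction.stabilizer (alternatingGroup (Fin n)) x = ⊥ := by
  by_cases hω : MulAction.stabilizer (alternatingGroup (Fin n)) ω = ⊥
  · right
    rintro _ ⟨g, rfl⟩
    change MulAction.stabilizer _ (g • ω) = ⊥
    rw [MulAction.stabilizer_smul_eq_stabilizer_map_conj, hω, Subgroup.map_bot]
  · left
    obtain ⟨K, hK, hKω, hKc⟩ := hbin.exists_closed ω hω
    rw [hKc.eq_top (by simpa using hn) hK, top_le_iff] at hKω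
    refine Set.eq_singleton_iff_unique_mem.2 ⟨MulAction.mem_orbit_self ω, ?_⟩
    rintro _ ⟨g, rfl⟩
    exact MulAction.mem_stabilizer_iff.1 (hKω ▸ Subgroup.mem_top g)
end

section
/- Let G be a finite group acting transitively on a finite set Ω, and assume the action is binary. Let H be the stabilizer of a point of Ω, let p be a prime dividing |H|, and let C be a conjugacy class of elements of order p of G of maximal fixity. Then for any g ∈ C ∩ H, every vertex in the connected component of g in the graph Γ(C) lies in H. -/
/-- The adjacency relation of the graph `Γ(C)` on a conjugacy class `C`: two distinct
vertices `x, y ∈ C` are joined when they commute and `x * y⁻¹ ∈ C` or `y * x⁻¹ ∈ C`. -/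
def GammaAdj {G : Type*} [Group G] (C : Set G) (x y : G) : Prop :=
  x ≠ y ∧ x ∈ C ∧ y ∈ C ∧ Commute x y ∧ (x * y⁻¹ ∈ C ∨ y * x⁻¹ ∈ C)

open MulAction

/-- The binary property for partial maps: a map on a subset `F` that agrees on each pair of
points of `F` with some group element is induced on `F` by a single group element. -/
lemma IsBinary.exists_smul_eq_on {G Ω : Type*} [Group G] [Finite Ω] [MulAction G Ω]
    (hbin : IsBinary G Ω) (F : Set Ω) (f : Ω → Ω)
    (hf : ∀ a ∈ F, ∀ b ∈ F, ∃ g : G, g • a = f a ∧ g • b = f b) :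
    ∃ g : G, ∀ a ∈ F, g • a = f a := by
  obtain ⟨n, ⟨e⟩⟩ := Finite.exists_equiv_fin F
  obtain ⟨g, hg⟩ := hbin n (fun i => (e.symm i : Ω)) (fun i => f (e.symm i))
    (fun i j => hf _ (e.symm i).2 _ (e.symm j).2)
  exact ⟨g, fun a ha => by simpa using hg (e ⟨a, ha⟩)⟩

lemma card_fixedBy_eq_of_isConj {G Ω : Type*} [Group G] [MulAction G Ω] {c x : G}
    (h : IsConj c x) : Nat.card ↥(fixedBy Ω x) = Nat.card ↥(fixedBy Ω c) := by
  obtain ⟨k, rfl⟩ := isConj_iff.1 h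
  refine (Nat.card_congr ((MulAction.toPerm k).subtypeEquiv fun a => ?_)).symm
  simp [mem_fixedBy, mul_smul]

/-- If `x` and `y` commute, `y ^ p = 1`, and `x`, `y`, `x * y⁻¹` all have `m` fixed points, where `m`
bounds the number of fixed points of every element of order `p`, then `x` and `y` have the same
fixed points. -/
lemma fixedBy_eq_of_commute {G Ω : Type*} [Group G] [Finite G] [Finite Ω] [MulAction G Ω]
    (hbin : IsBinary G Ω) {p m : ℕ} (hp : p.Prime)
    (hmax : ∀ x : G, orderOf x = p → Nat.card ↥(fixedBy Ω x) ≤ m)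
    {x y : G} (hxy : Commute x y) (hy : y ^ p = 1)
    (hxm : Nat.card ↥(fixedBy Ω x) = m) (hym : Nat.card ↥(fixedBy Ω y) = m)
    (hzm : Nat.card ↥(fixedBy Ω (x * y⁻¹)) = m) :
    fixedBy Ω x = fixedBy Ω y := by
  classical
  have hzy : ∀ a : Ω, (x * y⁻¹) • a = a → x • a = y • a := by
    intro a ha
    rw [hxy.inv_right.eq, mul_smul, inv_smul_eq_iff] at ha
    exact ha
  have hpres : ∀ a : Ω, (x * y⁻¹) • a = a → (x * y⁻¹) • (y • a) = y • a := by
    intro a ha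
    rw [← mul_smul, inv_mul_cancel_right, hzy a ha]
  have hxz : ∀ a : Ω, x • a = a → (x * y⁻¹) • a = a → y • a = a :=
    fun a h1 h2 => (hzy a h2).symm.trans h1
  have hyz : ∀ a : Ω, y • a = a → (x * y⁻¹) • a = a → x • a = a :=
    fun a h1 h2 => (hzy a h2).trans h1
  obtain ⟨h, hh⟩ := hbin.exists_smul_eq_on
    (fixedBy Ω x ∪ fixedBy Ω y ∪ fixedBy Ω (x * y⁻¹))
    (fun a => if (x * y⁻¹) • a = a then y • a else a) (by
      intro a ha b hb
      simp only [Set.mem_union, mem_fixedBy] at ha hb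
      by_cases hza : (x * y⁻¹) • a = a <;> by_cases hzb : (x * y⁻¹) • b = b
      · exact ⟨y, by simp [hza], by simp [hzb]⟩
      · rcases hb with (hb | hb) | hb
        · exact ⟨x, by simp [hza, hzy], by simp [hzb, hb]⟩
        · exact ⟨y, by simp [hza], by simp [hzb, hb]⟩
        · exact absurd hb hzb
      · rcases ha with (ha | ha) | ha
        · exact ⟨x, by simp [hza, ha], by simp [hzb, hzy]⟩
        · exact ⟨y, by simp [hza, ha], by simp [hzb]⟩
        · exact absurd ha hza
      · exact ⟨1, by simp [hza], by simp [hzb]⟩)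
  have hhx : ∀ a : Ω, x • a = a → h • a = a := by
    intro a ha
    have := hh a (Or.inl (Or.inl ha))
    split_ifs at this with hz
    · rw [this, hxz a ha hz]
    · exact this
  have hhy : ∀ a : Ω, y • a = a → h • a = a := by
    intro a ha
    have := hh a (Or.inl (Or.inr ha))
    split_ifs at this with hz
    · rw [this, ha]
    · exact this
  have hhz : ∀ a : Ω, (x * y⁻¹) • a = a → h • a = y • a := by
    intro a ha
    have := hh a (Or.inr ha)
    simpa only [if_pos ha] using this
  -- Inclusions between sets of maximal size `m` are equalities.
  have heq : ∀ S T : Set Ω, S ⊆ T → Nat.card S = m → Nat.card T ≤ m → S = T := by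
    intro S T hST hS hT
    refine Set.eq_of_subset_of_ncard_le hST ?_ T.toFinite
    rw [← Nat.card_coe_set_eq, ← Nat.card_coe_set_eq, hS]
    exact hT
  by_cases hdvd : p ∣ orderOf h
  · have hord : orderOf (h ^ (orderOf h / p)) = p :=
      orderOf_pow_orderOf_div (orderOf_pos h).ne' hdvd
    have hsub : fixedBy Ω h ⊆ fixedBy Ω (h ^ (orderOf h / p)) := fun a ha =>
      (stabilizer G a).pow_mem ha _
    rw [heq (fixedBy Ω x) _ (fun a ha => hsub (hhx a ha)) hxm (hmax _ hord),
      heq (fixedBy Ω y) _ (fun a ha => hsub (hhy a ha)) hym (hmax _ hord)]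
  · obtain ⟨k, hk⟩ := exists_pow_eq_self_of_coprime ((hp.coprime_iff_not_dvd).2 hdvd)
    have hpow : ∀ n : ℕ, ∀ a : Ω, (x * y⁻¹) • a = a → h ^ n • a = y ^ n • a := by
      intro n
      induction n with
      | zero => intro a _; simp
      | succ n ih =>
        intro a ha
        rw [pow_succ, mul_smul, hhz a ha, ih _ (hpres a ha), pow_succ, mul_smul]
    have hzsub : ∀ a : Ω, (x * y⁻¹) • a = a → y • a = a := by
      intro a ha
      have h1 : h ^ p • a = a := by rw [hpow p a ha, hy, one_smul]
      have h2 : (h ^ p) ^ k • a = a := (stabilizer G a).pow_mem h1 k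
      rw [hk] at h2
      rw [← hhz a ha, h2]
    have hZY := heq (fixedBy Ω (x * y⁻¹)) (fixedBy Ω y) hzsub hzm hym.le
    refine (heq _ _ (fun a ha => ?_) hym hxm.le).symm
    have hz : a ∈ fixedBy Ω (x * y⁻¹) := by rw [hZY]; exact ha
    exact hyz a ha hz

/-- Lemma: let `G` act transitively and binarily on a finite set `Ω`, let `H` be the
stabilizer of a point, let `p` be a prime dividing `|H|`, and let `C` be a conjugacy class
of elements of order `p` of maximal fixity. Then for any `g ∈ C ∩ H`, every vertex in the
connected component of `g` in `Γ(C)` lies in `H`. -/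
theorem component_of_graph_in_stabilizer
    (G Ω : Type*) [Group G] [Finite G] [Fintype Ω] [MulAction G Ω]
    [MulAction.IsPretransitive G Ω]
    (hbin : IsBinary G Ω)
    (ω₀ : Ω) (H : Subgroup G) (hH : H = MulAction.stabilizer G ω₀)
    (p : ℕ) (hp : p.Prime) (hpH : p ∣ Nat.card H)
    (c : G) (hc : orderOf c = p)
    (C : Set G) (hC : C = {x : G | IsConj c x})
    (hmax : ∀ x : G, orderOf x = p →
      Nat.card ↥(MulAction.fixedBy Ω x) ≤ Nat.card ↥(MulAction.fixedBy Ω c))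
    (g : G) (hgC : g ∈ C) (hgH : g ∈ H) :
    ∀ v : G, Relation.ReflTransGen (GammaAdj C) g v → v ∈ H := by
  intro v hv
  have hconj : ∀ x ∈ C, IsConj c x := fun x hx => by rw [hC] at hx; exact hx
  have hcard : ∀ x ∈ C, Nat.card ↥(fixedBy Ω x) = Nat.card ↥(fixedBy Ω c) :=
    fun x hx => card_fixedBy_eq_of_isConj (hconj x hx)
  have hpow : ∀ x ∈ C, x ^ p = 1 := by
    intro x hx
    obtain ⟨k, rfl⟩ := isConj_iff.1 (hconj x hx)
    rw [conj_pow, ← hc, pow_orderOf_eq_one, mul_one, mul_inv_cancel]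
  induction hv with
  | refl => exact hgH
  | tail _ hadj ih =>
    obtain ⟨-, hx, hy, hxy, hz⟩ := hadj
    rename_i x y _
    have hzm : Nat.card ↥(fixedBy Ω (x * y⁻¹)) = Nat.card ↥(fixedBy Ω c) := by
      -- `y * x⁻¹` is the inverse of `x * y⁻¹`, so it has the same fixed points.
      rcases hz with hz | hz
      · exact hcard _ hz
      · rw [← hcard _ hz, ← fixedBy_inv Ω (x * y⁻¹), mul_inv_rev, inv_inv]
    have hfix := fixedBy_eq_of_commute hbin hp hmax hxy (hpow _ hy) (hcard _ hx) (hcard _ hy) hzm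
    rw [hH] at ih ⊢
    have hmem : ω₀ ∈ fixedBy Ω x := ih
    rw [hfix] at hmem
    exact hmem
end

section
/- Let G be a finite group acting on a finite set Ω. The following conditions are equivalent: (1) there exist triples I, J ∈ Ω³ such that I and J are 2-related but not 3-related; (2) there exist points α₁, α₂, α₃ ∈ Ω with stabilizers H₁, H₂, H₃ respectively, and elements h_i ∈ H_i for i = 1, 2, 3, satisfying h₁h₂h₃ = 1 and such that there do NOT exist h₂' ∈ H₂ ∩ H₁ and h₃' ∈ H₃ ∩ H₁ with h₁h₂'h₃' = 1; (3) there exist points α₁, α₂, α₃ ∈ Ω with stabilizers H₁, H₂, H₃ such that the set H₁ ∩ (H₂·H₃) is not contained in H₁ ∩ ((H₁ ∩ H₂)·H₃), where A·B denotes the set of products {ab : a ∈ A, b ∈ B}. Moreover, when these conditions hold, the action of G on Ω is not binary. -/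
/-!
If elements `g₁₂, g₁₃, g₂₃` witness that the triples `I, J` are 2-related, then
`h₁ = g₁₃⁻¹ g₁₂`, `h₂ = g₁₂⁻¹ g₂₃`, `h₃ = g₂₃⁻¹ g₁₃` fix the entries of `I` and have product `1`;
a factorisation `h₁ h₂' h₃' = 1` with `h₂', h₃'` also fixing the first entry makes `g₁₂ h₂'` map
`I` to `J`. Conversely, a triple `h₁ h₂ h₃ = 1` as in (2) gives the 2-related triples
`(α₁, α₂, α₃)` and `(α₁, h₁ α₂, α₃)`, and `g` maps one to the other exactly when `h₂' = h₁⁻¹ g`,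
`h₃' = g⁻¹` is a factorisation of the forbidden kind. Condition (3) is (2) rewritten for
`x = h₁⁻¹ = h₂ h₃`. Two triples as in (1) contradict the definition of a binary action directly.
-/

open Pointwise

/-- Tuples `I, J ∈ Ωⁿ` are `r`-related if for every choice of `r` indices there is an
element of `G` mapping the corresponding entries of `I` to those of `J`. -/
def IsRelated (G : Type*) {Ω : Type*} [Group G] [MulAction G Ω] {n : ℕ} (r : ℕ)
    (I J : Fin n → Ω) : Prop :=
  ∀ s : Finset (Fin n), s.card = r → ∃ g : G, ∀ i ∈ s, g • I i = J i

/-- Condition (1): there are triples that are 2-related but not 3-related. -/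
def Cond1 (G Ω : Type*) [Group G] [MulAction G Ω] : Prop :=
  ∃ I J : Fin 3 → Ω, IsRelated G 2 I J ∧ ¬ IsRelated G 3 I J

/-- Condition (2): there are points `α₁, α₂, α₃` with stabilizers `H₁, H₂, H₃`, and
`hᵢ ∈ Hᵢ` with `h₁h₂h₃ = 1`, such that there are no `h₂' ∈ H₂ ∩ H₁` and `h₃' ∈ H₃ ∩ H₁`
with `h₁h₂'h₃' = 1`. -/
def Cond2 (G Ω : Type*) [Group G] [MulAction G Ω] : Prop :=
  ∃ α₁ α₂ α₃ : Ω,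
    ∃ h₁ ∈ MulAction.stabilizer G α₁, ∃ h₂ ∈ MulAction.stabilizer G α₂,
      ∃ h₃ ∈ MulAction.stabilizer G α₃,
        h₁ * h₂ * h₃ = 1 ∧
        ¬ ∃ h₂' ∈ MulAction.stabilizer G α₂ ⊓ MulAction.stabilizer G α₁,
            ∃ h₃' ∈ MulAction.stabilizer G α₃ ⊓ MulAction.stabilizer G α₁,
              h₁ * h₂' * h₃' = 1

/-- Condition (3): there are points `α₁, α₂, α₃` with stabilizers `H₁, H₂, H₃` such that
`H₁ ∩ H₂·H₃` is not contained in `H₁ ∩ (H₁ ∩ H₂)·H₃`. -/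
def Cond3 (G Ω : Type*) [Group G] [MulAction G Ω] : Prop :=
  ∃ α₁ α₂ α₃ : Ω,
    ¬ ((MulAction.stabilizer G α₁ : Set G) ∩
        ((MulAction.stabilizer G α₂ : Set G) * (MulAction.stabilizer G α₃ : Set G)) ⊆
       (MulAction.stabilizer G α₁ : Set G) ∩
        (((MulAction.stabilizer G α₁ : Set G) ∩ (MulAction.stabilizer G α₂ : Set G)) *
          (MulAction.stabilizer G α₃ : Set G)))

/-- The degenerate pairs `i = j` are covered by 2-relatedness because `Fin 3` has a second
index. -/
lemma IsRelated.exists_pair {G Ω : Type*} [Group G] [MulAction G Ω] {I J : Fin 3 → Ω}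
    (h : IsRelated G 2 I J) (i j : Fin 3) : ∃ g : G, g • I i = J i ∧ g • I j = J j := by
  by_cases hij : i = j
  · subst hij
    obtain ⟨k, hk⟩ := exists_ne i
    obtain ⟨g, hg⟩ := h {i, k} (Finset.card_pair hk.symm)
    exact ⟨g, hg i (by simp), hg i (by simp)⟩
  · obtain ⟨g, hg⟩ := h {i, j} (Finset.card_pair hij)
    exact ⟨g, hg i (by simp), hg j (by simp)⟩

lemma isRelated_two_of_pairs {G Ω : Type*} [Group G] [MulAction G Ω] {I J : Fin 3 → Ω}
    (h : ∀ i j : Fin 3, i < j → ∃ g : G, g • I i = J i ∧ g • I j = J j) :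
    IsRelated G 2 I J := by
  intro s hs
  obtain ⟨i, j, hij, rfl⟩ := Finset.card_eq_two.mp hs
  rcases lt_or_gt_of_ne hij with hlt | hlt
  · obtain ⟨g, hi, hj⟩ := h i j hlt
    exact ⟨g, by simp [hi, hj]⟩
  · obtain ⟨g, hj, hi⟩ := h j i hlt
    exact ⟨g, by simp [hi, hj]⟩

lemma isRelated_three_iff {G Ω : Type*} [Group G] [MulAction G Ω] {I J : Fin 3 → Ω} :
    IsRelated G 3 I J ↔ ∃ g : G, ∀ i, g • I i = J i := by
  constructor
  · intro h
    obtain ⟨g, hg⟩ := h Finset.univ (by simp)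
    exact ⟨g, fun i => hg i (Finset.mem_univ i)⟩
  · rintro ⟨g, hg⟩ s -
    exact ⟨g, fun i _ => hg i⟩

lemma Cond1.cond2 {G Ω : Type*} [Group G] [MulAction G Ω] (h : Cond1 G Ω) : Cond2 G Ω := by
  obtain ⟨I, J, h2, h3⟩ := h
  rw [isRelated_three_iff] at h3
  obtain ⟨a, ha0, ha1⟩ := h2.exists_pair 0 1
  obtain ⟨b, hb0, hb2⟩ := h2.exists_pair 0 2
  obtain ⟨c, hc1, hc2⟩ := h2.exists_pair 1 2
  refine ⟨I 0, I 1, I 2, b⁻¹ * a, ?_, a⁻¹ * c, ?_, c⁻¹ * b, ?_, by group, ?_⟩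
  · rw [MulAction.mem_stabilizer_iff, mul_smul, ha0, ← hb0, inv_smul_smul]
  · rw [MulAction.mem_stabilizer_iff, mul_smul, hc1, ← ha1, inv_smul_smul]
  · rw [MulAction.mem_stabilizer_iff, mul_smul, hb2, ← hc2, inv_smul_smul]
  · rintro ⟨x, hx, y, hy, hxy⟩
    simp only [Subgroup.mem_inf, MulAction.mem_stabilizer_iff] at hx hy
    have hax : a * x = b * y⁻¹ := by
      rw [← eq_inv_of_mul_eq_one_left hxy]
      group
    refine h3 ⟨a * x, fun i => ?_⟩
    fin_cases i
    · change (a * x) • I 0 = J 0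
      rw [mul_smul, hx.2, ha0]
    · change (a * x) • I 1 = J 1
      rw [mul_smul, hx.1, ha1]
    · change (a * x) • I 2 = J 2
      rw [hax, mul_smul, inv_smul_eq_iff.mpr hy.1.symm, hb2]

lemma Cond2.cond1 {G Ω : Type*} [Group G] [MulAction G Ω] (h : Cond2 G Ω) : Cond1 G Ω := by
  obtain ⟨α₁, α₂, α₃, h₁, m₁, h₂, m₂, h₃, m₃, hmul, hno⟩ := h
  rw [MulAction.mem_stabilizer_iff] at m₁ m₂ m₃
  refine ⟨![α₁, α₂, α₃], ![α₁, h₁ • α₂, α₃], isRelated_two_of_pairs ?_, ?_⟩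
  · have e₂ : (h₁ * h₂) • α₂ = h₁ • α₂ := by rw [mul_smul, m₂]
    have e₃ : (h₁ * h₂) • α₃ = α₃ := by
      rw [eq_inv_of_mul_eq_one_left hmul, inv_smul_eq_iff, m₃]
    intro i j hij
    fin_cases i <;> fin_cases j <;> first | exact absurd hij (by decide) | skip
    · exact ⟨h₁, m₁, rfl⟩
    · exact ⟨1, one_smul _ _, one_smul _ _⟩
    · exact ⟨h₁ * h₂, e₂, e₃⟩
  · rw [isRelated_three_iff]
    rintro ⟨g, hg⟩
    have g₁ : g • α₁ = α₁ := hg 0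
    have g₂ : g • α₂ = h₁ • α₂ := hg 1
    have g₃ : g • α₃ = α₃ := hg 2
    refine hno ⟨h₁⁻¹ * g, ?_, g⁻¹, ?_, by group⟩
    · simp only [Subgroup.mem_inf, MulAction.mem_stabilizer_iff, mul_smul, inv_smul_eq_iff]
      exact ⟨g₂, by rw [g₁, m₁]⟩
    · simp only [Subgroup.mem_inf, MulAction.mem_stabilizer_iff, inv_smul_eq_iff]
      exact ⟨g₃.symm, g₁.symm⟩

lemma Cond2.cond3 {G Ω : Type*} [Group G] [MulAction G Ω] (h : Cond2 G Ω) : Cond3 G Ω := by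
  obtain ⟨α₁, α₂, α₃, h₁, m₁, h₂, m₂, h₃, m₃, hmul, hno⟩ := h
  refine ⟨α₁, α₂, α₃, fun hsub => hno ?_⟩
  have hprod : h₂ * h₃ = h₁⁻¹ := eq_inv_of_mul_eq_one_right (by rw [← mul_assoc, hmul])
  obtain ⟨-, x, hx, y, hy, hxy⟩ := hsub ⟨inv_mem m₁, Set.mem_mul.mpr ⟨h₂, m₂, h₃, m₃, hprod⟩⟩
  have hxy' : x * y = h₁⁻¹ := hxy
  -- The factor `y = x⁻¹ h₁⁻¹` lies in `H₁` because both `x` and `h₁` do.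
  have hy₁ : y ∈ MulAction.stabilizer G α₁ := by
    rw [eq_inv_mul_of_mul_eq hxy']
    exact mul_mem (inv_mem hx.1) (inv_mem m₁)
  exact ⟨x, ⟨hx.2, hx.1⟩, y, ⟨hy, hy₁⟩, by rw [mul_assoc, hxy', mul_inv_cancel]⟩

lemma Cond3.cond2 {G Ω : Type*} [Group G] [MulAction G Ω] (h : Cond3 G Ω) : Cond2 G Ω := by
  obtain ⟨α₁, α₂, α₃, hsub⟩ := h
  obtain ⟨x, ⟨hx₁, hx⟩, hnot⟩ := Set.not_subset.mp hsub
  obtain ⟨a, ha, b, hb, hab⟩ := Set.mem_mul.mp hx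
  refine ⟨α₁, α₂, α₃, x⁻¹, inv_mem hx₁, a, ha, b, hb, by
    rw [mul_assoc, hab, inv_mul_cancel], ?_⟩
  rintro ⟨a', ha', b', hb', hab'⟩
  rw [mul_assoc, inv_mul_eq_one] at hab'
  exact hnot ⟨hx₁, Set.mem_mul.mpr ⟨a', ⟨ha'.2, ha'.1⟩, b', hb'.1, hab'.symm⟩⟩

/-- Lemma (basic criteria): conditions (1), (2), (3) are equivalent, and when they hold the
action of `G` on `Ω` is not binary. -/
theorem basic_criteria (G Ω : Type*) [Group G] [Finite G] [Fintype Ω] [MulAction G Ω] :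
    (Cond1 G Ω ↔ Cond2 G Ω) ∧ (Cond2 G Ω ↔ Cond3 G Ω) ∧
    (Cond1 G Ω → ¬ IsBinary G Ω) := by
  refine ⟨⟨Cond1.cond2, Cond2.cond1⟩, ⟨Cond2.cond3, Cond3.cond2⟩, ?_⟩
  rintro ⟨I, J, h2, h3⟩ hbin
  exact h3 (isRelated_three_iff.mpr (hbin 3 I J h2.exists_pair))
end

section
/- Let a finite group G act on the disjoint union X ⊔ Y of nonempty finite G-sets X and Y, where the action of G on X is free (i.e., only the identity element of G fixes a point of X). Then RC(G, X ⊔ Y) = RC(G, Y). -/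
/-- The relational complexity `RC(G, Ω)`: the least `k ≥ 2` such that for every `n ≥ k`,
any two `k`-related `n`-tuples are in the same `G`-orbit (entrywise). -/
noncomputable def RC (G Ω : Type*) [Group G] [MulAction G Ω] : ℕ :=
  sInf {k : ℕ | 2 ≤ k ∧ ∀ n : ℕ, k ≤ n → ∀ I J : Fin n → Ω,
    IsRelated G k I J → ∃ g : G, ∀ i, g • I i = J i}

/-- The natural action of `G` on the disjoint union of two `G`-sets. -/
instance Sum.instMulActionDisjointUnion {G X Y : Type*} [Group G] [MulAction G X]
    [MulAction G Y] : MulAction G (X ⊕ Y) where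
  smul g p := p.map (fun x => g • x) (fun y => g • y)
  one_smul p := by cases p <;> show Sum.map _ _ _ = _ <;> simp
  mul_smul g h p := by cases p <;> show Sum.map _ _ _ = _ <;> simp [Sum.map, mul_smul]

/-- If `r` is at most the length of the tuples, `r`-relatedness gives a group element for every
set of at most `r` indices, since such a set extends to one of size exactly `r`. -/
lemma IsRelated.exists_of_card_le {G Ω : Type*} [Group G] [MulAction G Ω] {n r : ℕ}
    {I J : Fin n → Ω} (h : IsRelated G r I J) (hr : r ≤ n) (s : Finset (Fin n))
    (hs : s.card ≤ r) : ∃ g : G, ∀ i ∈ s, g • I i = J i := by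
  obtain ⟨t, hst, ht⟩ := Finset.exists_superset_card_eq hs (by simpa using hr)
  obtain ⟨g, hg⟩ := h t ht
  exact ⟨g, fun i hi => hg i (hst hi)⟩

/-- Lemma: if `G` acts on `X ⊔ Y` with the action on `X` free, then
`RC(G, X ⊔ Y) = RC(G, Y)`. -/
theorem RC_sum_free_eq (G X Y : Type*) [Group G] [Finite G]
    [Fintype X] [Fintype Y] [MulAction G X] [MulAction G Y]
    (hX : Nonempty X) (hY : Nonempty Y)
    (hfree : ∀ g : G, (∃ x : X, g • x = x) → g = 1) :
    RC G (X ⊕ Y) = RC G Y := by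
  have smul_inr (g : G) (y : Y) : g • (Sum.inr y : X ⊕ Y) = Sum.inr (g • y) := rfl
  unfold RC
  congr 1
  ext k
  refine and_congr_right fun hk => forall_congr' fun n => forall_congr' fun hn => ⟨?_, ?_⟩
  · intro H I J hIJ
    obtain ⟨g, hg⟩ := H (fun i => Sum.inr (I i)) (fun i => Sum.inr (J i)) (by
      intro s hs
      obtain ⟨g, hg⟩ := hIJ s hs
      exact ⟨g, fun i hi => congrArg Sum.inr (hg i hi)⟩)
    exact ⟨g, fun i => Sum.inr_injective (hg i)⟩
  · intro H I J hIJ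
    by_cases hI : ∃ i x, I i = Sum.inl x
    · obtain ⟨i, x, hix⟩ := hI
      obtain ⟨g, hg⟩ := hIJ.exists_of_card_le hn {i} (by simp; omega)
      refine ⟨g, fun j => ?_⟩
      obtain ⟨g', hg'⟩ := hIJ.exists_of_card_le hn {i, j} (Finset.card_le_two.trans hk)
      have h1 : g • I i = g' • I i := (hg i (by simp)).trans (hg' i (by simp)).symm
      rw [hix] at h1
      have h2 : g • x = g' • x := Sum.inl_injective h1
      have h3 : g'⁻¹ * g = 1 := hfree _ ⟨x, by rw [mul_smul, h2, inv_smul_smul]⟩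
      have h4 : g' = g := inv_mul_eq_one.mp h3
      exact h4 ▸ hg' j (by simp)
    · have hI' : ∀ i, ∃ y, I i = Sum.inr y := by
        intro i
        cases h : I i with
        | inl x => exact absurd ⟨i, x, h⟩ hI
        | inr y => exact ⟨y, rfl⟩
      choose I' hI' using hI'
      have hJ' : ∀ i, ∃ y, J i = Sum.inr y := by
        intro i
        obtain ⟨g, hg⟩ := hIJ.exists_of_card_le hn {i} (by simp; omega)
        exact ⟨g • I' i, by rw [← hg i (by simp), hI', smul_inr]⟩
      choose J' hJ' using hJ'
      have key (g : G) (i : Fin n) : g • I i = J i ↔ g • I' i = J' i := by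
        rw [hI', hJ']
        exact Sum.inr_injective.eq_iff
      obtain ⟨g, hg⟩ := H I' J' (by
        intro s hs
        obtain ⟨g, hg⟩ := hIJ s hs
        exact ⟨g, fun i hi => (key g i).1 (hg i hi)⟩)
      exact ⟨g, fun i => (key g i).2 (hg i)⟩
end

section
/- Let a finite group G act on a finite set Ω. Suppose there is a subset Λ ⊆ Ω with more than 2 elements, a permutation τ of Λ that is not induced on Λ by any element of the setwise stabilizer G_Λ, and permutations η₁, η₂, ..., η_r of Λ such that: (1) for each i, the permutation τη_i of Λ is induced by some element of G_Λ; (2) for each i, the support of τ and the support of η_i (as permutations of Λ) are disjoint; (3) every λ ∈ Λ is fixed by at least one η_i. Then the action of G on Ω is not binary. -/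
/-- Lemma: suppose `G` acts on `Ω`, and there is a subset `Λ ⊆ Ω` with more than 2 elements,
a permutation `τ` of `Λ` not induced by any element of `G`, and permutations `η₁, …, η_r` of
`Λ` such that each `τηᵢ` is induced by an element of `G`, the supports of `τ` and `ηᵢ` are
disjoint, and every point of `Λ` is fixed by some `ηᵢ`. Then the action is not binary. -/
theorem not_binary_of_tau_eta
    (G Ω : Type*) [Group G] [Finite G] [Fintype Ω] [MulAction G Ω]
    (Λ : Set Ω) (hcard : 2 < Λ.ncard)
    (τ : Equiv.Perm Λ)
    (hτ : ¬ ∃ g : G, ∀ x : Λ, g • (x : Ω) = ((τ x : Λ) : Ω))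
    (r : ℕ) (η : Fin r → Equiv.Perm Λ)
    (hind : ∀ i : Fin r, ∃ g : G, ∀ x : Λ, g • (x : Ω) = ((τ (η i x) : Λ) : Ω))
    (hdisj : ∀ (i : Fin r) (x : Λ), τ x = x ∨ η i x = x)
    (hfix : ∀ x : Λ, ∃ i : Fin r, η i x = x) :
    ¬ IsBinary G Ω := by
  intro hb
  have : Finite Λ := Subtype.finite
  obtain ⟨n, ⟨e⟩⟩ := Finite.exists_equiv_fin Λ
  -- If `τ` moves `x`, then every `η i` fixes `x`; take the `η i` that also fixes `y`.
  have key : ∀ x y : Λ, τ x ≠ x →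
      ∃ g : G, g • (x : Ω) = (τ x : Ω) ∧ g • (y : Ω) = (τ y : Ω) := by
    intro x y hx
    obtain ⟨i, hi⟩ := hfix y
    obtain ⟨g, hg⟩ := hind i
    have hxi : η i x = x := (hdisj i x).resolve_left hx
    exact ⟨g, by rw [hg, hxi], by rw [hg, hi]⟩
  obtain ⟨g, hg⟩ := hb n (fun k => (e.symm k : Ω)) (fun k => (τ (e.symm k) : Ω)) (by
    intro k l
    by_cases hk : τ (e.symm k) = e.symm k
    · by_cases hl : τ (e.symm l) = e.symm l
      · exact ⟨1, by simp [hk], by simp [hl]⟩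
      · obtain ⟨g, h₁, h₂⟩ := key _ (e.symm k) hl
        exact ⟨g, h₂, h₁⟩
    · exact key _ _ hk)
  exact hτ ⟨g, fun x => by simpa using hg (e x)⟩
end

section
/- Suppose a finite group G acts on a finite set Ω, p is a prime, and g and h are commuting elements of G of order p such that the cyclic subgroups ⟨g⟩, ⟨h⟩ and ⟨gh⁻¹⟩ are pairwise conjugate subgroups of G. Write K = ⟨g, h⟩. Suppose that (1) |Fix(K)| < |Fix(g)|, where Fix(K) is the set of points of Ω fixed by every element of K; and (2) g has maximal fixity. Then the action of G on Ω is not binary. -/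
/-- Two subgroups of `G` are conjugate when one is the image of the other under
conjugation by some element of `G`. -/
def SubgroupsConj {G : Type*} [Group G] (A B : Subgroup G) : Prop :=
  ∃ k : G, Subgroup.map (MulAut.conj k).toMonoidHom A = B

theorem card_fixedBy_of_subgroupsConj {G Ω : Type*} [Group G] [MulAction G Ω] {a b : G}
    (hab : SubgroupsConj (Subgroup.zpowers a) (Subgroup.zpowers b)) :
    Nat.card ↥(MulAction.fixedBy Ω b) = Nat.card ↥(MulAction.fixedBy Ω a) := by
  obtain ⟨k, hk⟩ := hab
  have himage : (fun ω : Ω => k • ω) '' MulAction.fixedBy Ω a = MulAction.fixedBy Ω b := by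
    ext ω
    constructor
    · rintro ⟨ω, hω, rfl⟩
      have hb : b ∈ Subgroup.map (MulAut.conj k).toMonoidHom (Subgroup.zpowers a) := by
        rw [hk]; exact Subgroup.mem_zpowers b
      obtain ⟨y, hy, rfl⟩ := hb
      have hyω : y ∈ MulAction.stabilizer G ω := (Subgroup.zpowers_le.2 hω) hy
      change (k * y * k⁻¹) • k • ω = k • ω
      rw [smul_smul, inv_mul_cancel_right, mul_smul, MulAction.mem_stabilizer_iff.1 hyω]
    · intro hω
      have ha : k * a * k⁻¹ ∈ Subgroup.zpowers b := by
        rw [← hk]; exact ⟨a, Subgroup.mem_zpowers a, rfl⟩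
      have haω : k * a * k⁻¹ ∈ MulAction.stabilizer G ω := (Subgroup.zpowers_le.2 hω) ha
      refine ⟨k⁻¹ • ω, ?_, smul_inv_smul k ω⟩
      have := MulAction.mem_stabilizer_iff.1 haω
      rw [MulAction.mem_fixedBy, eq_inv_smul_iff, smul_smul, smul_smul]
      exact this
  rw [← himage, Nat.card_image_of_injective (MulAction.injective k)]

/-- Binarity for partial maps in place of tuples: a map that agrees with a group element on each
pair of points of `S` agrees with a group element on all of `S`. -/
theorem IsBinary.exists_smul_eq {G Ω : Type*} [Group G] [Finite Ω] [MulAction G Ω]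
    (hbin : IsBinary G Ω) (S : Set Ω) (f : Ω → Ω)
    (hf : ∀ u ∈ S, ∀ v ∈ S, ∃ x : G, x • u = f u ∧ x • v = f v) :
    ∃ x : G, ∀ u ∈ S, x • u = f u := by
  obtain ⟨n, ⟨e⟩⟩ := Finite.exists_equiv_fin S
  obtain ⟨x, hx⟩ := hbin n (fun i => (e.symm i : Ω)) (fun i => f (e.symm i))
    (fun i j => hf _ (e.symm i).2 _ (e.symm j).2)
  exact ⟨x, fun u hu => by simpa using hx (e ⟨u, hu⟩)⟩

/-- If `x` acts as `g` on a `g`-invariant set containing a point that `g` moves, and `g` has prime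
order `p`, then `p` divides the order of `x`. -/
theorem dvd_orderOf_of_smul_eq {G Ω : Type*} [Group G] [MulAction G Ω] {p : ℕ} (hp : p.Prime)
    {g x : G} (hg : orderOf g = p) {B : Set Ω} (hB : ∀ u ∈ B, g • u ∈ B)
    (hx : ∀ u ∈ B, x • u = g • u) {b : Ω} (hb : b ∈ B) (hgb : g • b ≠ b) : p ∣ orderOf x := by
  have hpow : ∀ k : ℕ, x ^ k • b = g ^ k • b ∧ g ^ k • b ∈ B := by
    intro k
    induction k with
    | zero => simpa using hb
    | succ k ih =>
      rw [pow_succ', pow_succ', mul_smul, mul_smul, ih.1]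
      exact ⟨hx _ ih.2, hB _ ih.2⟩
  by_contra hdvd
  have hcop : (orderOf g).Coprime (orderOf x) := hg ▸ (Nat.Prime.coprime_iff_not_dvd hp).2 hdvd
  have hfix : g ^ orderOf x • b = b := by
    rw [← (hpow _).1, pow_orderOf_eq_one, one_smul]
  obtain ⟨m, hm⟩ := exists_pow_eq_self_of_coprime hcop.symm
  apply hgb
  have hmem : g ^ orderOf x ∈ MulAction.stabilizer G b := hfix
  have := Subgroup.pow_mem _ hmem m
  rwa [hm] at this

/-- Lemma: suppose `G` acts on `Ω`, `p` is a prime, and `g, h` are commuting elements of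
order `p` such that `⟨g⟩`, `⟨h⟩`, `⟨gh⁻¹⟩` are pairwise conjugate subgroups of `G`. If
`|Fix(⟨g, h⟩)| < |Fix(g)|` and `g` has maximal fixity, then the action is not binary. -/
theorem not_binary_of_commuting_p_elements
    (G Ω : Type*) [Group G] [Finite G] [Fintype Ω] [MulAction G Ω]
    (p : ℕ) (hp : p.Prime) (g h : G)
    (hg : orderOf g = p) (hh : orderOf h = p) (hcomm : Commute g h)
    (hconj₁ : SubgroupsConj (Subgroup.zpowers g) (Subgroup.zpowers h))
    (hconj₂ : SubgroupsConj (Subgroup.zpowers g) (Subgroup.zpowers (g * h⁻¹)))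
    (hconj₃ : SubgroupsConj (Subgroup.zpowers h) (Subgroup.zpowers (g * h⁻¹)))
    (hfixlt : Nat.card ↥{ω : Ω | ∀ x ∈ Subgroup.closure ({g, h} : Set G), x • ω = ω} <
      Nat.card ↥(MulAction.fixedBy Ω g))
    (hmax : ∀ x : G, orderOf x = p →
      Nat.card ↥(MulAction.fixedBy Ω x) ≤ Nat.card ↥(MulAction.fixedBy Ω g)) :
    ¬ IsBinary G Ω := by
  classical
  intro hbin
  set F : Set Ω := {ω : Ω | ∀ x ∈ Subgroup.closure ({g, h} : Set G), x • ω = ω} with hF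
  have hmemF : ∀ ω : Ω, g • ω = ω → h • ω = ω → ω ∈ F := by
    intro ω h1 h2 x hx
    have hle : Subgroup.closure ({g, h} : Set G) ≤ MulAction.stabilizer G ω := by
      rw [Subgroup.closure_le]
      rintro y (rfl | rfl)
      · exact h1
      · exact h2
    exact hle hx
  have hcardB := card_fixedBy_of_subgroupsConj (Ω := Ω) hconj₁
  have hcardC := card_fixedBy_of_subgroupsConj (Ω := Ω) hconj₂
  have hC_iff : ∀ u : Ω, (g * h⁻¹) • u = u ↔ g • u = h • u := by
    intro u
    rw [(hcomm.inv_right).eq, mul_smul, inv_smul_eq_iff]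
  obtain ⟨b, hb, hgb⟩ : ∃ b : Ω, h • b = b ∧ g • b ≠ b := by
    by_contra! hcon
    have hle : Nat.card ↥(MulAction.fixedBy Ω h) ≤ Nat.card F :=
      Nat.card_mono (Set.toFinite _) fun u hu => hmemF u (hcon u hu) hu
    omega
  obtain ⟨c, hc, hgc⟩ : ∃ c : Ω, (g * h⁻¹) • c = c ∧ g • c ≠ c := by
    by_contra! hcon
    have hle : Nat.card ↥(MulAction.fixedBy Ω (g * h⁻¹)) ≤ Nat.card F :=
      Nat.card_mono (Set.toFinite _) fun u hu =>
        hmemF u (hcon u hu) (((hC_iff u).1 hu).symm.trans (hcon u hu))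
    omega
  obtain ⟨x, hx⟩ := hbin.exists_smul_eq
    {u : Ω | g • u = u ∨ h • u = u ∨ (g * h⁻¹) • u = u}
    (fun u => if h • u = u then g • u else u) (by
      -- The values at a point of each of the three fixed-point sets, also where these meet.
      have hfA : ∀ u : Ω, g • u = u → (if h • u = u then g • u else u) = u := by
        intro u hu; simp [hu]
      have hfB : ∀ u : Ω, h • u = u → (if h • u = u then g • u else u) = g • u := by
        intro u hu; simp [hu]
      have hfC : ∀ u : Ω, (g * h⁻¹) • u = u → (if h • u = u then g • u else u) = u := by
        intro u hu
        split_ifs with h'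
        · exact ((hC_iff u).1 hu).trans h'
        · rfl
      have hgh : ∀ u : Ω, h • u = u → (g * h⁻¹) • u = g • u := by
        intro u hu
        rw [mul_smul, inv_smul_eq_iff.2 hu.symm]
      rintro u (hu | hu | hu) v (hv | hv | hv)
      · exact ⟨1, by rw [hfA u hu, one_smul], by rw [hfA v hv, one_smul]⟩
      · exact ⟨g, by rw [hfA u hu, hu], by rw [hfB v hv]⟩
      · exact ⟨1, by rw [hfA u hu, one_smul], by rw [hfC v hv, one_smul]⟩
      · exact ⟨g, by rw [hfB u hu], by rw [hfA v hv, hv]⟩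
      · exact ⟨g, by rw [hfB u hu], by rw [hfB v hv]⟩
      · exact ⟨g * h⁻¹, by rw [hfB u hu, hgh u hu], by rw [hfC v hv, hv]⟩
      · exact ⟨1, by rw [hfC u hu, one_smul], by rw [hfA v hv, one_smul]⟩
      · exact ⟨g * h⁻¹, by rw [hfC u hu, hu], by rw [hfB v hv, hgh v hv]⟩
      · exact ⟨1, by rw [hfC u hu, one_smul], by rw [hfC v hv, one_smul]⟩)
  have hxA : ∀ u : Ω, g • u = u → x • u = u := by
    intro u hu
    simpa [hu] using hx u (Or.inl hu)
  have hxB : ∀ u : Ω, h • u = u → x • u = g • u := by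
    intro u hu
    simpa [hu] using hx u (Or.inr (Or.inl hu))
  have hxc : x • c = c := by
    have hhc : ¬ h • c = c := fun h' => hgc (((hC_iff c).1 hc).trans h')
    simpa [hhc] using hx c (Or.inr (Or.inr hc))
  have hdvd : p ∣ orderOf x := by
    refine dvd_orderOf_of_smul_eq hp hg (B := MulAction.fixedBy Ω h) ?_ hxB hb hgb
    intro u hu
    rw [MulAction.mem_fixedBy] at hu ⊢
    rw [smul_smul, ← hcomm.eq, mul_smul, hu]
  have hord : orderOf (x ^ (orderOf x / p)) = p :=
    orderOf_pow_orderOf_div (orderOf_pos x).ne' hdvd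
  have hfixpow : ∀ u : Ω, x • u = u → x ^ (orderOf x / p) • u = u := by
    intro u hu
    have hmem : x ∈ MulAction.stabilizer G u := hu
    exact Subgroup.pow_mem _ hmem _
  have hlt : Nat.card ↥(MulAction.fixedBy Ω g) <
      Nat.card ↥(MulAction.fixedBy Ω (x ^ (orderOf x / p))) := by
    rw [Nat.card_coe_set_eq, Nat.card_coe_set_eq]
    refine Set.ncard_lt_ncard ⟨fun u hu => hfixpow u (hxA u hu), fun hsub => ?_⟩ (Set.toFinite _)
    exact hgc (hsub (hfixpow c hxc))
  exact absurd (hmax _ hord) (not_le.2 hlt)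
end

section
/- Let G be a finite group acting transitively on a finite set Ω with point stabilizer H, and assume p is a prime dividing |H|. Let C^rat be a rational conjugacy class of elements of order p of G of maximal fixity, and let X = C^rat ∩ H. If the action of G on Ω is binary, then no element of X is joined by an edge of Γ(C^rat) to an element of C^rat \ X; that is, there are no x ∈ X and y ∈ C^rat \ X with xy = yx and xy⁻¹ ∈ C^rat. -/
/-- The definition of a binary action, for tuples indexed by an arbitrary finite type. -/
lemma IsBinary.exists_smul_eq_s12 {G Ω ι : Type*} [Group G] [MulAction G Ω] [Finite ι]
    (h : IsBinary G Ω) (I J : ι → Ω)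
    (hIJ : ∀ i j : ι, ∃ g : G, g • I i = J i ∧ g • I j = J j) :
    ∃ g : G, ∀ i, g • I i = J i := by
  obtain ⟨n, ⟨e⟩⟩ := Finite.exists_equiv_fin ι
  obtain ⟨g, hg⟩ := h n (I ∘ e.symm) (J ∘ e.symm) (fun i j => hIJ _ _)
  exact ⟨g, fun i => by simpa using hg (e i)⟩

lemma fixedBy_subset_of_mem_zpowers {G Ω : Type*} [Group G] [MulAction G Ω] {a b : G}
    (h : b ∈ Subgroup.zpowers a) : MulAction.fixedBy Ω a ⊆ MulAction.fixedBy Ω b := by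
  obtain ⟨n, rfl⟩ := h
  exact MulAction.fixedBy_subset_fixedBy_zpow Ω a n

lemma zpowers_eq_of_conj {G : Type*} [Group G] {a b k : G}
    (h : Subgroup.map (MulAut.conj k).toMonoidHom (Subgroup.zpowers a) = Subgroup.zpowers b) :
    Subgroup.zpowers (k * a * k⁻¹) = Subgroup.zpowers b := by
  rw [MonoidHom.map_zpowers] at h
  exact h

lemma orderOf_of_conj_zpowers {G : Type*} [Group G] {a b : G}
    (h : SubgroupsConj (Subgroup.zpowers a) (Subgroup.zpowers b)) : orderOf b = orderOf a := by
  obtain ⟨k, hk⟩ := h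
  rw [← Nat.card_zpowers b, ← hk, ← Nat.card_zpowers a]
  exact Subgroup.card_map_of_injective (MulAut.conj k).injective

/-- The fixity is constant on a rational conjugacy class: the fixed points of an element are those
of the cyclic subgroup it generates, and conjugation by `k` translates them by `k`. -/
lemma card_fixedBy_of_conj_zpowers {G Ω : Type*} [Group G] [MulAction G Ω] {a b : G}
    (h : SubgroupsConj (Subgroup.zpowers a) (Subgroup.zpowers b)) :
    (MulAction.fixedBy Ω b).ncard = (MulAction.fixedBy Ω a).ncard := by
  obtain ⟨k, hk⟩ := h
  have hz := zpowers_eq_of_conj hk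
  have h1 : MulAction.fixedBy Ω b = MulAction.fixedBy Ω (k * a * k⁻¹) :=
    Set.Subset.antisymm
      (fixedBy_subset_of_mem_zpowers (hz ▸ Subgroup.mem_zpowers _))
      (fixedBy_subset_of_mem_zpowers (hz.symm ▸ Subgroup.mem_zpowers _))
  have h2 : MulAction.fixedBy Ω (k * a * k⁻¹) = (fun ω => k • ω) '' MulAction.fixedBy Ω a := by
    ext ω
    simp only [Set.mem_image, MulAction.mem_fixedBy]
    constructor
    · intro hω
      refine ⟨k⁻¹ • ω, ?_, smul_inv_smul k ω⟩
      rw [eq_inv_smul_iff, smul_smul, smul_smul, hω]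
    · rintro ⟨v, hv, rfl⟩
      simp [mul_smul, hv]
  rw [h1, h2]
  exact Set.ncard_image_of_injective _ (MulAction.injective k)

/-- If `g` agrees with an element `x` of prime order `p` on an `x`-invariant set on which `x` is
nontrivial, then `p` divides the order of `g`. -/
lemma dvd_orderOf_of_agree {G Ω : Type*} [Group G] [MulAction G Ω] {x g : G} {p : ℕ}
    (hp : p.Prime) (hx : orderOf x = p) (S : Set Ω) (hS : ∀ ω ∈ S, x • ω ∈ S)
    (hg : ∀ ω ∈ S, g • ω = x • ω) {ω : Ω} (hω : ω ∈ S) (hne : x • ω ≠ ω) :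
    p ∣ orderOf g := by
  have key : ∀ n : ℕ, x ^ n • ω ∈ S ∧ g ^ n • ω = x ^ n • ω := by
    intro n
    induction n with
    | zero => simpa using hω
    | succ n ih =>
      rw [pow_succ', pow_succ', mul_smul, mul_smul, ih.2]
      exact ⟨hS _ ih.1, hg _ ih.1⟩
  have h1 : MulAction.period x ω ∣ orderOf g := by
    rw [← MulAction.pow_smul_eq_iff_period_dvd, ← (key _).2, pow_orderOf_eq_one, one_smul]
  have h2 : MulAction.period x ω ∣ p := by
    rw [← MulAction.pow_smul_eq_iff_period_dvd, ← hx, pow_orderOf_eq_one, one_smul]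
  rcases (Nat.dvd_prime hp).1 h2 with h | h
  · refine absurd ?_ hne
    simpa [h] using MulAction.pow_period_smul x ω
  · rwa [h] at h1

/-- Lemma: let `G` act transitively on `Ω` with point stabilizer `H`, `p` a prime dividing
`|H|`, and `C^rat` a rational conjugacy class of elements of order `p` of maximal fixity.
Put `X = C^rat ∩ H`. If the action is binary, then no element of `X` is joined by an edge of
`Γ(C^rat)` to an element of `C^rat \ X`. -/
theorem no_edge_leaving_stabilizer_of_binary
    (G Ω : Type*) [Group G] [Finite G] [Fintype Ω] [MulAction G Ω]
    [MulAction.IsPretransitive G Ω]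
    (ω₀ : Ω) (H : Subgroup G) (hH : H = MulAction.stabilizer G ω₀)
    (p : ℕ) (hp : p.Prime) (hpH : p ∣ Nat.card H)
    (g₀ : G) (hg₀ : orderOf g₀ = p)
    (Crat : Set G)
    (hCrat : Crat = {x : G | SubgroupsConj (Subgroup.zpowers g₀) (Subgroup.zpowers x)})
    (hmax : ∀ x : G, orderOf x = p →
      Nat.card ↥(MulAction.fixedBy Ω x) ≤ Nat.card ↥(MulAction.fixedBy Ω g₀))
    (hbin : IsBinary G Ω) :
    ∀ x ∈ Crat ∩ (H : Set G), ∀ y ∈ Crat \ (Crat ∩ (H : Set G)),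
      ¬ (Commute x y ∧ x * y⁻¹ ∈ Crat) := by
  classical
  subst hH hCrat
  rintro x ⟨hxC, hxH⟩ y ⟨hyC, hyH⟩ ⟨hcomm, hzC⟩
  have hx0 : x • ω₀ = ω₀ := hxH
  have hy0 : y • ω₀ ≠ ω₀ := fun h => hyH ⟨hyC, h⟩
  have hxo : orderOf x = p := (orderOf_of_conj_zpowers hxC).trans hg₀
  have cx := card_fixedBy_of_conj_zpowers (Ω := Ω) hxC
  have cy := card_fixedBy_of_conj_zpowers (Ω := Ω) hyC
  have cz := card_fixedBy_of_conj_zpowers (Ω := Ω) hzC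
  have hz : ∀ ω, ω ∈ MulAction.fixedBy Ω (x * y⁻¹) ↔ x • ω = y • ω := by
    intro ω
    rw [MulAction.mem_fixedBy, hcomm.inv_right.eq, mul_smul, inv_smul_eq_iff]
  have hzinv : ∀ ω ∈ MulAction.fixedBy Ω (x * y⁻¹), x • ω ∈ MulAction.fixedBy Ω (x * y⁻¹) := by
    intro ω hω
    rw [hz] at hω ⊢
    rw [smul_smul y, ← hcomm.eq, mul_smul, hω]
  obtain ⟨ω, hωz, hωx⟩ : ∃ ω ∈ MulAction.fixedBy Ω (x * y⁻¹), x • ω ≠ ω := by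
    by_contra! hcon
    have heq : MulAction.fixedBy Ω (x * y⁻¹) = MulAction.fixedBy Ω x :=
      Set.eq_of_subset_of_ncard_le hcon (by rw [cx, cz]) (Set.toFinite _)
    have h0 : ω₀ ∈ MulAction.fixedBy Ω (x * y⁻¹) := heq ▸ hx0
    rw [hz, hx0] at h0
    exact hy0 h0.symm
  obtain ⟨g, hg⟩ := hbin.exists_smul_eq_s12
    (ι := {ω : Ω // x • ω = ω ∨ y • ω = ω ∨ x • ω = y • ω})
    (fun i => i.1) (fun i => if x • i.1 = y • i.1 then x • i.1 else i.1) (by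
      rintro ⟨a, ha⟩ ⟨b, hb⟩
      have h1 : ∀ c : Ω, x • c = c ∨ y • c = c →
          (1 : G) • c = if x • c = y • c then x • c else c := by
        intro c hc
        rw [one_smul]
        split_ifs <;> grind
      have h2 : ∀ c : Ω, x • c = c ∨ x • c = y • c →
          x • c = if x • c = y • c then x • c else c := by
        intro c hc
        split_ifs <;> grind
      have h3 : ∀ c : Ω, y • c = c ∨ x • c = y • c →
          y • c = if x • c = y • c then x • c else c := by
        intro c hc
        split_ifs <;> grind
      have : ((x • a = a ∨ y • a = a) ∧ (x • b = b ∨ y • b = b)) ∨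
          ((x • a = a ∨ x • a = y • a) ∧ (x • b = b ∨ x • b = y • b)) ∨
          ((y • a = a ∨ x • a = y • a) ∧ (y • b = b ∨ x • b = y • b)) := by tauto
      rcases this with ⟨ha, hb⟩ | ⟨ha, hb⟩ | ⟨ha, hb⟩
      · exact ⟨1, h1 a ha, h1 b hb⟩
      · exact ⟨x, h2 a ha, h2 b hb⟩
      · exact ⟨y, h3 a ha, h3 b hb⟩)
  have hgz : ∀ v ∈ MulAction.fixedBy Ω (x * y⁻¹), g • v = x • v := by
    intro v hv
    rw [hz] at hv
    simpa [hv] using hg ⟨v, Or.inr (Or.inr hv)⟩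
  have hgxy : MulAction.fixedBy Ω x ∪ MulAction.fixedBy Ω y ⊆ MulAction.fixedBy Ω g := by
    rintro v (hv | hv) <;> rw [MulAction.mem_fixedBy] at hv ⊢
    · have := hg ⟨v, Or.inl hv⟩
      grind
    · have := hg ⟨v, Or.inr (Or.inl hv)⟩
      grind
  obtain ⟨m, hm⟩ := dvd_orderOf_of_agree hp hxo _ hzinv hgz hωz hωx
  have hgo : orderOf (g ^ m) = p := by
    have hpos := orderOf_pos g
    have hm0 : m ≠ 0 := by
      rintro rfl
      omega
    rw [orderOf_pow_of_dvd hm0 ⟨p, by rw [hm, mul_comm]⟩, hm]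
    exact Nat.mul_div_cancel _ (Nat.pos_of_ne_zero hm0)
  have hsub : MulAction.fixedBy Ω y ⊂ MulAction.fixedBy Ω (g ^ m) := by
    have hall := hgxy.trans
      (fixedBy_subset_of_mem_zpowers (Ω := Ω) (Subgroup.npow_mem_zpowers g m))
    exact ⟨Set.subset_union_right.trans hall, fun h => hy0 (h (hall (Or.inl hx0)))⟩
  have hlt := Set.ncard_lt_ncard hsub (Set.toFinite _)
  have hle := hmax _ hgo
  rw [Nat.card_coe_set_eq, Nat.card_coe_set_eq] at hle
  omega
end

section
/- Let C be a conjugacy class of involutions in the symmetric group Sₙ. If s, t ∈ C are distinct, st = ts, and st ∈ C, then the size of the support of s is divisible by 4. In particular, if the size of the support of the elements of C is not divisible by 4, then the graph Γ(C) has no edges at all. -/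
/-!
The sign is a class function, so `s`, `t` and `s * t` in `C` all have the same sign `ε`, and
`ε = ε * ε` forces `ε = 1`. An involution is a product of `k` disjoint transpositions, with support
of size `2 * k` and sign `(-1) ^ k`; an even involution therefore has support of size divisible
by `4` (`four_dvd_card_support_of_sign_eq_one`).
-/

theorem four_dvd_card_support_of_sign_eq_one {n : ℕ} {s : Equiv.Perm (Fin n)}
    (hs : orderOf s = 2) (h : Equiv.Perm.sign s = 1) : 4 ∣ s.support.card := by
  obtain ⟨k, hk⟩ := Equiv.Perm.cycleType_prime_order (σ := s) (by rw [hs]; exact Nat.prime_two)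
  rw [hs] at hk
  have hcard : (k + 1) * 2 = s.support.card := by
    rw [← Equiv.Perm.sum_cycleType, hk, Multiset.sum_replicate, smul_eq_mul]
  rw [Equiv.Perm.sign_of_cycleType, hk] at h
  simp only [Multiset.sum_replicate, Multiset.card_replicate, smul_eq_mul] at h
  have heven : Even ((k + 1) * 2 + (k + 1)) := by
    by_contra hodd
    rw [Nat.not_even_iff_odd] at hodd
    rw [hodd.neg_one_pow] at h
    exact absurd h (by decide)
  obtain ⟨m, hm⟩ := heven
  omega

/-- Lemma: let `C` be a conjugacy class of involutions in `Sₙ`. If `s, t ∈ C` are distinct,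
commute, and `st ∈ C`, then `4` divides the size of the support of `s`. In particular, if
the support size of the elements of `C` is not divisible by `4`, the graph `Γ(C)` has no
edges at all. -/
theorem support_card_dvd_four_of_edge
    (n : ℕ) (c : Equiv.Perm (Fin n)) (hc : orderOf c = 2)
    (C : Set (Equiv.Perm (Fin n))) (hC : C = {x : Equiv.Perm (Fin n) | IsConj c x}) :
    (∀ s ∈ C, ∀ t ∈ C, s ≠ t → Commute s t → s * t ∈ C → 4 ∣ s.support.card) ∧
    ((¬ 4 ∣ c.support.card) →
      ∀ s ∈ C, ∀ t ∈ C, s ≠ t → ¬ (Commute s t ∧ s * t ∈ C)) := by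
  subst hC
  have key : ∀ s t : Equiv.Perm (Fin n), IsConj c s → IsConj c t → IsConj c (s * t) →
      4 ∣ c.support.card := by
    intro s t hs ht hst
    have sign_eq : ∀ x, IsConj c x → Equiv.Perm.sign c = Equiv.Perm.sign x := fun x hx =>
      isConj_iff_eq.1 (Equiv.Perm.sign.map_isConj hx)
    have h := sign_eq _ hst
    rw [Equiv.Perm.sign_mul, ← sign_eq s hs, ← sign_eq t ht] at h
    exact four_dvd_card_support_of_sign_eq_one hc (left_eq_mul.1 h)
  refine ⟨fun s hs t ht _ _ hst => ?_, fun h4 s hs t ht _ h => h4 (key s t hs ht h.2)⟩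
  have hcard : s.support.card = c.support.card := by
    rw [← Equiv.Perm.sum_cycleType, ← Equiv.Perm.sum_cycleType,
      Equiv.Perm.isConj_iff_cycleType_eq.1 hs]
  rw [hcard]
  exact key s t hs ht hst
end

section
/- Let p be a prime and let K be a subgroup of the alternating group A_p that is generated by two p-cycles. If K is not abelian, then the order of K is even. -/
/-!
Suppose `K` has odd order. After conjugation, identify the letters with `ZMod p` so that `s` is the
translation `x ↦ x + 1`. The set `D = {g 1 - g 0 : g ∈ K}` satisfies `g (x + d) - g x ∈ D` for all
`g ∈ K`, `d ∈ D`. If both `d` and `-d` were in `D`, some element of `K` would swap `0` and `1`,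
which is impossible in odd order; hence `2 |D| < p`.

Following P. Müller's proof of Burnside's theorem on permutation groups of prime degree, such
invariance forces each `g ∈ K` to be affine (`natDegree_le_one_of_invariant`). Represent `g` by a
polynomial `f` of degree `n < p`. Let `r ≥ 1` be minimal with `∑ d ∈ D, d ^ r ≠ 0`; then `r ≤ |D|`.
For `n k < p` invariance gives the polynomial identity
`∑ d ∈ D, f (X + d) ^ k = ∑ d ∈ D, (f + d) ^ k`. For `k = ⌈r / n⌉`, comparing coefficients at
`n k - r` gives a contradiction when `n ≥ 2`.

So `t` is affine, `x ↦ a x + b`, and `t ^ p = 1` gives `a = a ^ p = 1`. Thus `s` and `t` commute and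
`K` is abelian.
-/

open Polynomial in
/-- Some power sum of positive exponent at most `|D|` is nonzero: otherwise the polynomial
`X * ∏ d ∈ D \ {1}, (X - d)`, which on `D` is nonzero only at `1`, would have sum zero over `D`. -/
lemma exists_power_sum_ne_zero {F : Type*} [Field F] [DecidableEq F] (D : Finset F)
    (h1 : (1 : F) ∈ D) : ∃ r, 1 ≤ r ∧ r ≤ D.card ∧ ∑ d ∈ D, d ^ r ≠ 0 := by
  by_contra! hcon
  set Q : F[X] := X * ∏ d ∈ D.erase 1, (X - C d) with hQ
  have hdeg : Q.natDegree ≤ D.card := by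
    have h2 : (∏ d ∈ D.erase 1, (X - C d)).natDegree = (D.erase 1).card :=
      natDegree_finsetProd_X_sub_C_eq_card _ _
    have h3 := Finset.card_erase_add_one h1
    calc Q.natDegree ≤ (X : F[X]).natDegree + _ := natDegree_mul_le
      _ ≤ D.card := by rw [h2, natDegree_X]; omega
  have hsum : ∑ d ∈ D, Q.eval d = 0 := by
    simp_rw [eval_eq_sum_range]
    rw [Finset.sum_comm]
    refine Finset.sum_eq_zero fun j hj => ?_
    rw [← Finset.mul_sum]
    rcases Nat.eq_zero_or_pos j with rfl | hj0
    · simp [hQ]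
    · rw [hcon j hj0 (by simp at hj; omega), mul_zero]
  rw [Finset.sum_eq_single_of_mem 1 h1] at hsum
  · rw [hQ, eval_mul, eval_X, one_mul, eval_prod, Finset.prod_eq_zero_iff] at hsum
    obtain ⟨d, hd, hd0⟩ := hsum
    simp only [eval_sub, eval_X, eval_C, sub_eq_zero] at hd0
    exact (Finset.mem_erase.1 hd).1 hd0.symm
  · intro d hd hne
    rw [hQ, eval_mul, eval_prod, Finset.prod_eq_zero (Finset.mem_erase.2 ⟨hne, hd⟩) (by simp),
      mul_zero]

open Polynomial in
/-- Müller's lemma: a permutation polynomial of degree below `p` that maps pairs with difference in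
a small set `D` to such pairs is affine. The bound `2 |D| < p` makes room for an exponent `k` with
`r ≤ n k < p`, where `r` is the first exponent with nonvanishing power sum over `D`. -/
lemma natDegree_le_one_of_invariant (p : ℕ) [Fact p.Prime] (D : Finset (ZMod p))
    (h1 : (1 : ZMod p) ∈ D) (hD : 2 * D.card < p) (f : (ZMod p)[X]) (hf : f.natDegree < p)
    (hinj : Function.Injective fun x => f.eval x)
    (hinv : ∀ x, ∀ d ∈ D, f.eval (x + d) - f.eval x ∈ D) : f.natDegree ≤ 1 := by
  have hpp : p.Prime := Fact.out
  classical
  have hex := exists_power_sum_ne_zero D h1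
  obtain ⟨hr1, hrD, hwr⟩ := Nat.find_spec hex
  set r := Nat.find hex with hr
  have hmin : ∀ j, 1 ≤ j → j < r → ∑ d ∈ D, d ^ j = 0 := by
    intro j hj1 hjr
    by_contra hne
    exact Nat.find_min hex hjr ⟨hj1, by omega, hne⟩
  by_contra! hn
  set n := f.natDegree with hndef
  -- `k` is the ceiling of `r / n`.
  obtain ⟨k, hk1, hkr, hlow, hup⟩ : ∃ k, 1 ≤ k ∧ k ≤ r ∧ r ≤ n * k ∧ n * k < p := by
    refine ⟨(r - 1) / n + 1, Nat.le_add_left _ _, ?_, ?_, ?_⟩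
    · have := Nat.div_le_self (r - 1) n
      omega
    · have h2 := Nat.div_add_mod (r - 1) n
      have := Nat.mod_lt (r - 1) (show 0 < n by omega)
      rw [mul_add]; omega
    · have h2 := Nat.div_add_mod (r - 1) n
      rw [mul_add]
      rcases Nat.lt_or_ge (r - 1) n with h | h
      · rw [Nat.div_eq_of_lt h]; omega
      · omega
  have hdegk : (f ^ k).natDegree = n * k := by rw [natDegree_pow, mul_comm]
  have hident : ∑ d ∈ D, taylor d (f ^ k) = ∑ d ∈ D, (f + C d) ^ k := by
    rw [← sub_eq_zero]
    refine eq_zero_of_natDegree_lt_card_of_eval_eq_zero _ Function.injective_id ?_ ?_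
    · intro x
      simp only [eval_sub, eval_finsetSum, taylor_eval, eval_pow, eval_add, eval_C, id, sub_eq_zero]
      have hinjOn : Set.InjOn (fun d => f.eval (x + d) - f.eval x) (D : Set (ZMod p)) := by
        intro a _ b _ hab
        exact add_left_cancel (hinj (sub_left_injective hab))
      refine Finset.sum_nbij (fun d => f.eval (x + d) - f.eval x) (hinv x) hinjOn ?_ ?_
      · exact Finset.surjOn_of_injOn_of_card_le _ (hinv x) hinjOn le_rfl
      · intro d _
        ring
    · rw [ZMod.card]
      refine lt_of_le_of_lt ?_ hup
      refine (natDegree_sub_le _ _).trans (max_le ?_ ?_)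
      · refine natDegree_sum_le_of_forall_le _ _ fun d _ => ?_
        rw [natDegree_taylor, hdegk]
      · refine natDegree_sum_le_of_forall_le _ _ fun d _ => ?_
        rw [natDegree_pow, natDegree_add_C, mul_comm]
  have hco := congrArg (fun q => q.coeff (n * k - r)) hident
  set m := n * k - r with hm
  have hleft : (∑ d ∈ D, taylor d (f ^ k)).coeff m =
      D.card * (f ^ k).coeff m + (n * k).choose m * f.leadingCoeff ^ k * ∑ d ∈ D, d ^ r := by
    rw [finsetSum_coeff]
    have : ∀ d ∈ D, (taylor d (f ^ k)).coeff m =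
        ∑ j ∈ Finset.range (r + 1), ((j + m).choose m * (f ^ k).coeff (j + m)) * d ^ j := by
      intro d _
      rw [taylor_coeff, eval_eq_sum_range' (n := r + 1)]
      · simp_rw [hasseDeriv_coeff]
      · have := natDegree_hasseDeriv_le (f ^ k) m
        omega
    rw [Finset.sum_congr rfl this, Finset.sum_comm]
    simp_rw [← Finset.mul_sum]
    rw [Finset.sum_range_succ, Finset.sum_eq_single_of_mem 0 (by simp; omega)]
    · have hrm : r + m = n * k := by omega
      have hlc : (f ^ k).coeff (n * k) = f.leadingCoeff ^ k := by
        rw [← leadingCoeff_pow, leadingCoeff, hdegk]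
      rw [hrm, hlc]
      simp [mul_comm]
    · intro j hj hj0
      rw [hmin j (by omega) (by simpa using hj), mul_zero]
  have hright : (∑ d ∈ D, (f + C d) ^ k).coeff m = D.card * (f ^ k).coeff m := by
    have hexp : ∑ d ∈ D, (f + C d) ^ k =
        ∑ j ∈ Finset.range (k + 1), f ^ (k - j) * (k.choose j : (ZMod p)[X]) *
          C (∑ d ∈ D, d ^ j) := by
      simp_rw [add_comm f, add_pow]
      rw [Finset.sum_comm]
      refine Finset.sum_congr rfl fun j _ => ?_
      rw [map_sum, Finset.mul_sum]
      refine Finset.sum_congr rfl fun d _ => ?_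
      rw [map_pow]; ring
    rw [hexp, finsetSum_coeff, Finset.sum_eq_single_of_mem 0 (by simp)]
    · simp [mul_comm]
    · intro j hj hj0
      rw [Finset.mem_range] at hj
      rcases Nat.lt_or_ge j r with h | h
      · rw [hmin j (by omega) h]; simp
      · -- Here `j = k = r`, and the constant term does not reach the exponent `m = (n - 1) r > 0`.
        have hjk : j = k := by omega
        have hm0 : m ≠ 0 := by
          have : 2 * k ≤ n * k := Nat.mul_le_mul_right k hn
          omega
        subst hjk
        rw [Nat.sub_self, pow_zero, one_mul, Nat.choose_self, Nat.cast_one, one_mul, coeff_C,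
          if_neg hm0]
  rw [hleft, hright, add_eq_left] at hco
  have hch : ((n * k).choose m : ZMod p) ≠ 0 := by
    rw [Ne, ZMod.natCast_eq_zero_iff]
    intro hdvd
    have h2 : p ∣ (n * k).factorial := by
      rw [← Nat.choose_mul_factorial_mul_factorial (show m ≤ n * k by omega), mul_assoc]
      exact hdvd.mul_right _
    have := (hpp.dvd_factorial).1 h2
    omega
  have hlc : f.leadingCoeff ≠ 0 := by
    rw [Ne, leadingCoeff_eq_zero]
    rintro rfl
    simp [hndef] at hn
  exact mul_ne_zero (mul_ne_zero hch (pow_ne_zero _ hlc)) hwr hco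

lemma addRight_pow (p : ℕ) (j : ℕ) (x : ZMod p) :
    ((Equiv.addRight (1 : ZMod p)) ^ j) x = x + j := by
  induction j with
  | zero => simp
  | succ j ih => rw [pow_succ', Equiv.Perm.mul_apply, ih]; simp [add_assoc]

lemma translation_mem (p : ℕ) [NeZero p] (K : Subgroup (Equiv.Perm (ZMod p)))
    (hs : Equiv.addRight (1 : ZMod p) ∈ K) (c : ZMod p) : Equiv.addRight c ∈ K := by
  have : Equiv.addRight c = (Equiv.addRight (1 : ZMod p)) ^ c.val := by
    ext x
    rw [addRight_pow]; simp
  rw [this]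
  exact K.pow_mem hs _

open Polynomial in
/-- A group of permutations of `ZMod p` that contains the translations and has only elements of odd
order consists of affine maps. -/
lemma affine_of_odd (p : ℕ) [Fact p.Prime] (K : Subgroup (Equiv.Perm (ZMod p)))
    (hs : Equiv.addRight (1 : ZMod p) ∈ K) (hodd : ∀ u ∈ K, ∃ m, u ^ (2 * m + 1) = 1)
    (g : Equiv.Perm (ZMod p)) (hg : g ∈ K) : ∃ a b, ∀ x, g x = a * x + b := by
  classical
  set D : Finset (ZMod p) := Finset.univ.filter fun d => ∃ h ∈ K, h 1 - h 0 = d with hDdef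
  have hmem : ∀ d, d ∈ D ↔ ∃ h ∈ K, h 1 - h 0 = d := by simp [hDdef]
  -- By translating, a difference `d ∈ D` is realised from any base point.
  have hbase : ∀ d ∈ D, ∀ x, ∃ h ∈ K, h 0 = x ∧ h 1 = x + d := by
    intro d hd x
    obtain ⟨h, hh, rfl⟩ := (hmem d).1 hd
    refine ⟨Equiv.addRight (x - h 0) * h, K.mul_mem (translation_mem p K hs _) hh, ?_, ?_⟩
    · simp
    · simp only [Equiv.Perm.mul_apply, Equiv.coe_addRight]; ring
  have h1 : (1 : ZMod p) ∈ D := (hmem 1).2 ⟨1, K.one_mem, by simp⟩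
  have h0 : (0 : ZMod p) ∉ D := by
    rw [hmem]
    rintro ⟨h, -, hh⟩
    exact one_ne_zero (h.injective (sub_eq_zero.1 hh))
  have hneg : ∀ d ∈ D, -d ∉ D := by
    intro d hd hd'
    obtain ⟨h, hh, h0, h1⟩ := hbase d hd 0
    obtain ⟨k, hk, k0, k1⟩ := hbase (-d) hd' d
    have e0 : (k⁻¹ * h) 0 = 1 := by
      rw [Equiv.Perm.mul_apply, Equiv.Perm.inv_eq_iff_eq, h0, k1]; ring
    have e1 : (k⁻¹ * h) 1 = 0 := by
      rw [Equiv.Perm.mul_apply, Equiv.Perm.inv_eq_iff_eq, h1, k0]; ring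
    obtain ⟨m, hm⟩ := hodd _ (K.mul_mem (K.inv_mem hk) hh)
    have hsq : ∀ j, ((k⁻¹ * h) ^ (2 * j)) 1 = 1 := by
      intro j
      induction j with
      | zero => simp
      | succ j ih =>
        rw [show 2 * (j + 1) = 2 * j + 1 + 1 by ring, pow_succ, pow_succ, Equiv.Perm.mul_apply,
          Equiv.Perm.mul_apply, e1, e0, ih]
    have h2 := hsq m
    rw [pow_succ] at hm
    have h3 := congrArg (fun u : Equiv.Perm (ZMod p) => u 0) hm
    simp only [Equiv.Perm.mul_apply (_ ^ _), e0, h2, Equiv.Perm.one_apply] at h3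
    exact one_ne_zero h3
  have hcard : 2 * D.card < p := by
    have hdisj : Disjoint D (D.image Neg.neg) := by
      rw [Finset.disjoint_left]
      intro d hd hd'
      obtain ⟨e, he, rfl⟩ := Finset.mem_image.1 hd'
      exact hneg e he hd
    have hci : (D.image Neg.neg).card = D.card := Finset.card_image_of_injective _ neg_injective
    have hlt : (D ∪ D.image Neg.neg).card < (Finset.univ : Finset (ZMod p)).card := by
      refine Finset.card_lt_card (Finset.ssubset_univ_iff.2 fun h => ?_)
      have := Finset.mem_univ (0 : ZMod p)
      rw [← h] at this
      simp [h0] at this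
    rw [Finset.card_union_of_disjoint hdisj, hci, Finset.card_univ, ZMod.card] at hlt
    omega
  set f : (ZMod p)[X] := Lagrange.interpolate Finset.univ id g with hfdef
  have hfe : ∀ x, f.eval x = g x := fun x =>
    Lagrange.eval_interpolate_at_node (v := id) g Function.injective_id.injOn (Finset.mem_univ x)
  have hfd : f.natDegree < p := by
    have := Lagrange.degree_interpolate_lt (s := Finset.univ) (v := id) (r := g)
      Function.injective_id.injOn
    rw [Finset.card_univ, ZMod.card] at this
    by_cases hf0 : f = 0
    · rw [hf0, natDegree_zero]; exact (Fact.out : p.Prime).pos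
    · exact (natDegree_lt_iff_degree_lt hf0).2 this
  have hle := natDegree_le_one_of_invariant p D h1 hcard f hfd
    (by simp_rw [hfe]; exact g.injective) (by
      intro x d hd
      obtain ⟨h, hh, h0, h1⟩ := hbase d hd x
      rw [hmem, hfe, hfe]
      exact ⟨g * h, K.mul_mem hg hh, by simp [h0, h1]⟩)
  obtain ⟨a, b, hab⟩ := exists_eq_X_add_C_of_natDegree_le_one hle
  exact ⟨a, b, fun x => by rw [← hfe, hab]; simp⟩

/-- An affine permutation of `ZMod p` of order dividing `p` has slope `1`. -/
lemma commute_of_affine (p : ℕ) [Fact p.Prime] (t : Equiv.Perm (ZMod p)) (ht : t ^ p = 1)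
    (a b : ZMod p) (hab : ∀ x, t x = a * x + b) : Commute (Equiv.addRight (1 : ZMod p)) t := by
  have hpow : ∀ j, (t ^ j) 1 - (t ^ j) 0 = a ^ j := by
    intro j
    induction j with
    | zero => simp
    | succ j ih =>
      rw [pow_succ', Equiv.Perm.mul_apply, Equiv.Perm.mul_apply, hab, hab, pow_succ', ← ih]; ring
  have h := hpow p
  rw [ht, ZMod.pow_card] at h
  have ha : a = 1 := by simpa using h.symm
  refine Equiv.ext fun x => ?_
  simp only [Equiv.Perm.mul_apply, Equiv.coe_addRight, hab, ha]
  ring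

/-- Proposition: let `p` be a prime and let `K ≤ A_p` be generated by two `p`-cycles. If `K`
is not abelian, then the order of `K` is even. -/
theorem even_card_of_nonabelian_two_p_cycles
    (p : ℕ) (hp : p.Prime) (s t : Equiv.Perm (Fin p))
    (hs : s.IsCycle) (hssupp : s.support.card = p)
    (ht : t.IsCycle) (htsupp : t.support.card = p)
    (K : Subgroup (Equiv.Perm (Fin p))) (hK : K = Subgroup.closure ({s, t} : Set (Equiv.Perm (Fin p))))
    (hKA : K ≤ alternatingGroup (Fin p))
    (hnonab : ¬ ∀ x ∈ K, ∀ y ∈ K, x * y = y * x) :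
    Even (Nat.card K) := by
  have : Fact p.Prime := ⟨hp⟩
  by_contra hev
  rw [Nat.not_even_iff_odd] at hev
  obtain ⟨m, hm⟩ := hev
  apply hnonab
  have hsK : s ∈ K := hK ▸ Subgroup.subset_closure (by simp)
  have htK : t ∈ K := hK ▸ Subgroup.subset_closure (by simp)
  have hKpow : ∀ u ∈ K, u ^ (2 * m + 1) = 1 := by
    intro u hu
    have := pow_card_eq_one' (x := (⟨u, hu⟩ : K))
    rw [hm] at this
    simpa using congrArg Subtype.val this
  have htp : t ^ p = 1 := by
    have h := pow_orderOf_eq_one t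
    rwa [ht.orderOf, htsupp] at h
  -- The relabelling `φ` of the letters by `ZMod p` carries `s` to `x ↦ x + 1`.
  obtain ⟨φ, hφ⟩ : ∃ φ : Equiv.Perm (Fin p) ≃* Equiv.Perm (ZMod p),
      φ s = Equiv.addRight (1 : ZMod p) := by
    let e : Fin p ≃ ZMod p := Fintype.equivOfCardEq (by simp)
    let ψ : Equiv.Perm (Fin p) ≃* Equiv.Perm (ZMod p) := e.permCongrHom
    have hcyc : ((ψ.symm (Equiv.addRight (1 : ZMod p)))).IsCycle ∧
        ((ψ.symm (Equiv.addRight (1 : ZMod p)))).support.card = p := by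
      have happ : ∀ (u : Equiv.Perm (ZMod p)) x, ψ.symm u x = e.symm (u (e x)) := fun _ _ => rfl
      constructor
      · refine ⟨e.symm 0, by simp [happ], fun y _ => ⟨(e y).val, ?_⟩⟩
        rw [zpow_natCast, ← map_pow, happ, addRight_pow]; simp
      · have : (ψ.symm (Equiv.addRight (1 : ZMod p))).support = Finset.univ := by
          ext x
          simp [happ, Equiv.symm_apply_eq]
        rw [this, Finset.card_univ, Fintype.card_fin]
    obtain ⟨c, hc⟩ := isConj_iff.1 (hs.isConj hcyc.1 (hssupp.trans hcyc.2.symm))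
    exact ⟨(MulAut.conj c).trans ψ, by simp [hc]⟩
  have hodd : ∀ u ∈ K.map φ.toMonoidHom, ∃ m, u ^ (2 * m + 1) = 1 := by
    rintro _ ⟨u, hu, rfl⟩
    exact ⟨m, by rw [← map_pow, hKpow u hu, map_one]⟩
  obtain ⟨a, b, hab⟩ := affine_of_odd p (K.map φ.toMonoidHom) ⟨s, hsK, hφ⟩ hodd (φ t)
    ⟨t, htK, rfl⟩
  have hcomm : Commute s t := by
    have h := commute_of_affine p (φ t) (by rw [← map_pow, htp, map_one]) a b hab
    rw [← hφ] at h
    exact φ.injective (by rw [map_mul, map_mul]; exact h)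
  have hclosure : ∀ x ∈ ({s, t} : Set (Equiv.Perm (Fin p))),
      ∀ y ∈ ({s, t} : Set (Equiv.Perm (Fin p))), x * y = y * x := by
    rintro x (rfl | rfl) y (rfl | rfl)
    exacts [rfl, hcomm, hcomm.symm, rfl]
  have hcommK := Subgroup.isMulCommutative_closure hclosure
  intro x hx y hy
  rw [hK] at hx hy
  exact congrArg Subtype.val (hcommK.is_comm.comm ⟨x, hx⟩ ⟨y, hy⟩)
end

section
/- Let s, t ∈ Aₙ be two cycles with supports S and T respectively. Assume that S ∩ T, S \ T and T \ S are all nonempty. Then the subgroup ⟨s, t⟩ generated by s and t has even order. -/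
/-!
Suppose `G = ⟨s, t⟩` has odd order. Then no element of `G` interchanges two distinct points, so
every orbit `O` of `G` on ordered pairs of distinct points is antisymmetric. The group `G` acts
transitively on `X = S ∪ T`. Take `x ∈ S \ T` and `y ∈ T`, and let `O` be the orbit of `(x, y)`.
As `t` fixes `x` and is transitive on `T`, the orbit `O` contains `{x} × T`, so by transitivity
every point of `X` has at least `|T|` out-neighbours in `O`. Antisymmetry gives
`2 |X| |T| ≤ 2 |O| ≤ |X| (|X| - 1)`, that is, `2 |T| + 1 ≤ |X|` (`two_mul_card_support_lt`).
Symmetrically `2 |S| + 1 ≤ |X|`, which contradicts `|S| + |T| ≥ |X|`.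
-/

lemma eq_of_swapped {α : Type*} (G : Subgroup (Equiv.Perm α)) (hG : Odd (Nat.card G))
    {h : Equiv.Perm α} (hh : h ∈ G) {u v : α} (huv : h u = v) (hvu : h v = u) : u = v := by
  obtain ⟨k, hk⟩ := hG
  have h1 : h ^ Nat.card G = 1 := by
    have := pow_card_eq_one' (x := (⟨h, hh⟩ : G))
    exact congrArg Subtype.val this
  have h2 : ∀ j : ℕ, (h ^ (2 * j)) u = u := by
    intro j
    induction j with
    | zero => simp
    | succ j ih =>
      rw [Nat.mul_succ, pow_add, Equiv.Perm.mul_apply, pow_two, Equiv.Perm.mul_apply, huv, hvu, ih]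
  have h3 : (h ^ (2 * k + 1)) u = u := by rw [← hk, h1]; rfl
  rw [pow_succ', Equiv.Perm.mul_apply, h2, huv] at h3
  exact h3.symm

/-- Counting in an antisymmetric orbital: if a group of odd order is transitive on `X` and the
stabiliser of `x ∈ X` has an orbit containing `T`, then `T` is less than half of `X`. -/
lemma two_mul_card_lt {α : Type*} [DecidableEq α] (G : Subgroup (Equiv.Perm α))
    (hG : Odd (Nat.card G)) (X T : Finset α) (x y : α) (hxX : x ∈ X) (hxy : x ≠ y)
    (hTX : T ⊆ X)
    (hT : ∀ z ∈ T, ∃ g ∈ G, g x = x ∧ g y = z)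
    (htrans : ∀ u ∈ X, ∃ g ∈ G, g x = u)
    (hinv : ∀ g ∈ G, ∀ u ∈ X, g u ∈ X) :
    2 * T.card + 1 ≤ X.card := by
  classical
  -- the orbital of `(x, y)`, cut down to `X`
  let O : Finset (α × α) := (X ×ˢ X).filter fun p => ∃ g ∈ G, g x = p.1 ∧ g y = p.2
  have hlow : X.card * T.card ≤ O.card := by
    have hfib : ∀ u ∈ X, T.card ≤ (O.filter fun p => p.1 = u).card := by
      intro u hu
      obtain ⟨g, hg, hgu⟩ := htrans u hu
      refine Finset.card_le_card_of_injOn (fun z => (u, g z)) ?_ ?_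
      · intro z hz
        obtain ⟨k, hk, hkx, hky⟩ := hT z hz
        simp only [O, Finset.mem_coe, Finset.mem_filter, Finset.mem_product]
        exact ⟨⟨⟨hu, hinv g hg z (hTX hz)⟩, g * k, G.mul_mem hg hk, by simp [hkx, hgu],
          by simp [hky]⟩, trivial⟩
      · intro a _ b _ hab
        exact g.injective (Prod.ext_iff.1 hab).2
    have hmaps : Set.MapsTo Prod.fst (O : Set (α × α)) (X : Set α) := by
      intro p hp
      exact (Finset.mem_product.1 (Finset.mem_filter.1 hp).1).1
    rw [Finset.card_eq_sum_card_fiberwise hmaps, ← smul_eq_mul]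
    exact Finset.card_nsmul_le_sum _ _ _ hfib
  have hanti : ∀ u v, (u, v) ∈ O → (v, u) ∈ O → u = v := by
    intro u v h1 h2
    obtain ⟨g, hg, hgx, hgy⟩ := (Finset.mem_filter.1 h1).2
    obtain ⟨k, hk, hkx, hky⟩ := (Finset.mem_filter.1 h2).2
    simp only at hgx hgy hkx hky
    refine eq_of_swapped G hG (G.mul_mem hk (G.inv_mem hg)) (h := k * g⁻¹) ?_ ?_
    · rw [← hgx, ← hkx]; simp
    · rw [← hgy, ← hky]; simp
  have hne : ∀ p ∈ O, p.1 ≠ p.2 := by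
    intro p hp h
    obtain ⟨g, _, hgx, hgy⟩ := (Finset.mem_filter.1 hp).2
    exact hxy (g.injective (by rw [hgx, hgy, h]))
  have hup : O.card + O.card ≤ X.card * X.card - X.card := by
    have hdisj : Disjoint O (O.image Prod.swap) := by
      rw [Finset.disjoint_left]
      rintro ⟨u, v⟩ h1 h2
      obtain ⟨⟨a, b⟩, hab, he⟩ := Finset.mem_image.1 h2
      obtain ⟨rfl, rfl⟩ := Prod.ext_iff.1 he
      exact hne _ h1 (hanti _ _ h1 hab)
    have hsub : O ∪ O.image Prod.swap ⊆ X.offDiag := by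
      have hO : ∀ p ∈ O, p ∈ X.offDiag := fun p hp =>
        have h := Finset.mem_product.1 (Finset.mem_filter.1 hp).1
        Finset.mem_offDiag.2 ⟨h.1, h.2, hne p hp⟩
      intro p hp
      rcases Finset.mem_union.1 hp with hp | hp
      · exact hO p hp
      · obtain ⟨q, hq, rfl⟩ := Finset.mem_image.1 hp
        obtain ⟨h1, h2, h3⟩ := Finset.mem_offDiag.1 (hO q hq)
        exact Finset.mem_offDiag.2 ⟨h2, h1, h3.symm⟩
    have := Finset.card_le_card hsub
    rwa [Finset.card_union_of_disjoint hdisj,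
      Finset.card_image_of_injective _ Prod.swap_injective, Finset.offDiag_card] at this
  have hpos : 0 < X.card := Finset.card_pos.2 ⟨x, hxX⟩
  have hle : X.card ≤ X.card * X.card := Nat.le_mul_self _
  refine le_of_mul_le_mul_left (a := X.card) ?_ hpos
  have : X.card * (2 * T.card + 1) = 2 * (X.card * T.card) + X.card := by ring
  omega

lemma two_mul_card_support_lt {n : ℕ} (s t : Equiv.Perm (Fin n))
    (hs : s.IsCycle) (ht : t.IsCycle) (hST : (s.support ∩ t.support).Nonempty)
    (hSnotT : (s.support \ t.support).Nonempty)
    (hodd : Odd (Nat.card (Subgroup.closure ({s, t} : Set (Equiv.Perm (Fin n)))))) :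
    2 * t.support.card + 1 ≤ (s.support ∪ t.support).card := by
  obtain ⟨x, hx⟩ := hSnotT
  obtain ⟨y, hy⟩ := hST
  obtain ⟨hxS, hxT⟩ := Finset.mem_sdiff.1 hx
  obtain ⟨hyS, hyT⟩ := Finset.mem_inter.1 hy
  set G := Subgroup.closure ({s, t} : Set (Equiv.Perm (Fin n))) with hGdef
  have hsG : s ∈ G := Subgroup.subset_closure (by simp)
  have htG : t ∈ G := Subgroup.subset_closure (by simp)
  have hsame : ∀ {f : Equiv.Perm (Fin n)}, f.IsCycle → ∀ {a b}, a ∈ f.support → b ∈ f.support →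
      ∃ i : ℤ, (f ^ i) a = b := fun hf _ _ ha hb =>
    hf.sameCycle (Equiv.Perm.mem_support.1 ha) (Equiv.Perm.mem_support.1 hb)
  refine two_mul_card_lt G hodd _ _ x y (Finset.mem_union_left _ hxS) ?_
    Finset.subset_union_right ?_ ?_ ?_
  · rintro rfl; exact hxT hyT
  · intro z hz
    obtain ⟨i, hi⟩ := hsame ht hyT hz
    exact ⟨t ^ i, G.zpow_mem htG i,
      Equiv.Perm.zpow_apply_eq_self_of_apply_eq_self (Equiv.Perm.notMem_support.1 hxT) i, hi⟩
  · -- a point of `T` is reached from `x` by moving along `s` to `y ∈ S ∩ T`, then along `t`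
    intro u hu
    rcases Finset.mem_union.1 hu with hu | hu
    · obtain ⟨i, hi⟩ := hsame hs hxS hu
      exact ⟨s ^ i, G.zpow_mem hsG i, hi⟩
    · obtain ⟨i, hi⟩ := hsame hs hxS hyS
      obtain ⟨j, hj⟩ := hsame ht hyT hu
      exact ⟨t ^ j * s ^ i, G.mul_mem (G.zpow_mem htG j) (G.zpow_mem hsG i), by
        rw [Equiv.Perm.mul_apply, hi, hj]⟩
  · -- every element of `G` fixes each point outside `S ∪ T`
    have hfix : ∀ g ∈ G, ∀ u ∉ s.support ∪ t.support, g u = u := by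
      intro g hg
      induction hg using Subgroup.closure_induction with
      | mem g hg =>
        intro u hu
        rw [Finset.mem_union, not_or] at hu
        rcases hg with rfl | rfl
        · exact Equiv.Perm.notMem_support.1 hu.1
        · exact Equiv.Perm.notMem_support.1 hu.2
      | one => intro u _; rfl
      | mul g k _ _ ihg ihk =>
        intro u hu
        rw [Equiv.Perm.mul_apply, ihk u hu, ihg u hu]
      | inv g _ ih =>
        intro u hu
        rw [Equiv.Perm.inv_eq_iff_eq, ih u hu]
    intro g hg u hu
    by_contra h
    exact h (by rwa [g.injective (hfix g hg _ h)])

/-- Proposition: let `s, t ∈ Aₙ` be cycles with supports `S` and `T` such that `S ∩ T`,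
`S \ T` and `T \ S` are all nonempty. Then `⟨s, t⟩` has even order. -/
theorem even_card_of_overlapping_cycles
    (n : ℕ) (s t : Equiv.Perm (Fin n))
    (hsA : s ∈ alternatingGroup (Fin n)) (htA : t ∈ alternatingGroup (Fin n))
    (hs : s.IsCycle) (ht : t.IsCycle)
    (hST : (s.support ∩ t.support).Nonempty)
    (hSnotT : (s.support \ t.support).Nonempty)
    (hTnotS : (t.support \ s.support).Nonempty) :
    Even (Nat.card (Subgroup.closure ({s, t} : Set (Equiv.Perm (Fin n))))) := by
  by_contra hev
  rw [Nat.not_even_iff_odd] at hev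
  have h1 := two_mul_card_support_lt s t hs ht hST hSnotT hev
  have h2 := two_mul_card_support_lt t s ht hs (by rwa [Finset.inter_comm]) hTnotS
    (by rwa [Set.pair_comm])
  rw [Finset.union_comm] at h2
  have := Finset.card_union_le s.support t.support
  omega
end

section
/- Let K be a subgroup of the alternating group Aₙ of odd order, let p be a prime, and let s, t ∈ K be p-cycles. Then either the supports of s and t are disjoint, or ⟨s⟩ = ⟨t⟩. In particular, s and t commute. -/
/-!
Odd order enters only through one fact: no element of `K` interchanges two distinct points.
Suppose the supports of `s` and `t` meet.

If the supports differ, pick `x ∈ supp t \ supp s`, `x' ∈ supp s \ supp t` and `h ∈ ⟨s, t⟩` with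
`h x = x'`. Both `h (supp s)` and `supp t` have `p` elements and lie in `(supp s ∪ supp t) \ {x'}`,
a set with at most `2p - 2` elements, so `h c ∈ supp t` for some `c ∈ supp s`. Then
`(x, x')`, `(x, c)`, `(x', h c)`, `(x', x)` are in one `K`-orbit of pairs, which produces an element
of `K` interchanging `x` and `x'` (`support_eq_of_no_swap`).

If the supports coincide, identify them with `ZMod p` so that `s` becomes `i ↦ i + 1`, and let `D` be
the set of differences of the orbital of `(0, 1)`. Then `t` maps pairs with difference in `D`
to pairs with difference in `D`, and `D ∩ -D = ∅` because of odd order. By Müller's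
polynomial proof of Burnside's theorem on groups of prime degree, such a permutation is affine
(`affine_of_preserves_differences`): compare coefficients in
`∑ d ∈ D, f (X + d) ^ m = ∑ d ∈ D, (f + d) ^ m`, where `f` is the polynomial of degree less than `p`
representing `t`. An affine map without fixed points is a translation, that is, a power of `s`.
-/

open Polynomial

/-! ### Maps preserving a set of differences modulo a prime -/

/-- The power sums of exponents `1, …, |D|` of a nonempty set of nonzero elements do not all
vanish; the first nonvanishing one is selected. -/
lemma exists_first_power_sum {F : Type*} [Field F] [DecidableEq F] (D : Finset F) (h0 : (0 : F) ∉ D)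
    (hne : D.Nonempty) :
    ∃ w, 1 ≤ w ∧ w ≤ D.card ∧ ∑ d ∈ D, d ^ w ≠ 0 ∧
      ∀ j, 1 ≤ j → j < w → ∑ d ∈ D, d ^ j = 0 := by
  have hex : ∃ w, 1 ≤ w ∧ w ≤ D.card ∧ ∑ d ∈ D, d ^ w ≠ 0 := by
    by_contra! hcon
    obtain ⟨d0, hd0⟩ := hne
    -- `Q` has degree `|D|`, vanishes at `0` and at every point of `D` except `d0`.
    set Q : F[X] := X * ∏ d ∈ D.erase d0, (X - C d) with hQ
    have hdeg : Q.natDegree ≤ D.card := by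
      rw [hQ]
      refine natDegree_mul_le.trans ?_
      rw [natDegree_X, natDegree_finsetProd_X_sub_C_eq_card, Finset.card_erase_of_mem hd0]
      have := Finset.card_pos.2 ⟨d0, hd0⟩
      omega
    have h1 : ∑ d ∈ D, Q.eval d = Q.eval d0 := by
      refine Finset.sum_eq_single_of_mem d0 hd0 fun d hd hne => ?_
      rw [hQ, eval_mul, eval_prod]
      rw [Finset.prod_eq_zero (Finset.mem_erase.2 ⟨hne, hd⟩) (by simp), mul_zero]
    have h2 : Q.eval d0 ≠ 0 := by
      rw [hQ, eval_mul, eval_prod, eval_X]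
      refine mul_ne_zero (fun h => h0 (h ▸ hd0)) (Finset.prod_ne_zero_iff.2 fun d hd => ?_)
      rw [eval_sub, eval_X, eval_C, sub_ne_zero]
      exact (Finset.ne_of_mem_erase hd).symm
    apply h2
    rw [← h1]
    simp_rw [eval_eq_sum_range' (Nat.lt_succ_of_le hdeg)]
    rw [Finset.sum_comm]
    refine Finset.sum_eq_zero fun j hj => ?_
    rw [← Finset.mul_sum]
    rcases Nat.eq_zero_or_pos j with rfl | hj0
    · simp [hQ]
    · rw [hcon j hj0 (Nat.lt_succ_iff.1 (Finset.mem_range.1 hj)), mul_zero]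
  classical
  refine ⟨Nat.find hex, (Nat.find_spec hex).1, (Nat.find_spec hex).2.1, (Nat.find_spec hex).2.2,
    fun j hj hjw => ?_⟩
  by_contra hne
  exact Nat.find_min hex hjw ⟨hj, (hjw.le.trans (Nat.find_spec hex).2.1), hne⟩

lemma sum_eval_of_power_sums_zero {F : Type*} [Field F] (D : Finset F) (w : ℕ) (hw : 1 ≤ w)
    (hz : ∀ j, 1 ≤ j → j < w → ∑ d ∈ D, d ^ j = 0) (q : F[X]) (hq : q.natDegree ≤ w) :
    ∑ d ∈ D, q.eval d = D.card * q.coeff 0 + q.coeff w * ∑ d ∈ D, d ^ w := by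
  simp_rw [eval_eq_sum_range' (Nat.lt_succ_of_le hq)]
  rw [Finset.sum_comm, Finset.sum_range_succ, ← Finset.mul_sum]
  congr 1
  obtain ⟨v, rfl⟩ : ∃ v, w = v + 1 := ⟨w - 1, by omega⟩
  rw [Finset.sum_range_succ']
  rw [Finset.sum_eq_zero]
  · simp
  · intro j hj
    rw [← Finset.mul_sum, hz (j + 1) (by omega) (by have := Finset.mem_range.1 hj; omega), mul_zero]

/-- Müller's lemma: an injective self-map of `ZMod p` that preserves the relation `i - j ∈ D`, for a
small nonempty set `D` of nonzero differences, is affine. -/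
lemma affine_of_preserves_differences (p : ℕ) [Fact p.Prime] (T : ZMod p → ZMod p)
    (hT : Function.Injective T) (D : Finset (ZMod p)) (h0 : (0 : ZMod p) ∉ D) (hne : D.Nonempty)
    (hcard : 2 * D.card < p) (hD : ∀ i, ∀ d ∈ D, T (i + d) - T i ∈ D) :
    ∃ a b, ∀ i, T i = a * i + b := by
  have hpp : p.Prime := Fact.out
  obtain ⟨f, hfdeg, hf⟩ : ∃ f : (ZMod p)[X], f.natDegree < p ∧ ∀ i, f.eval i = T i := by
    refine ⟨Lagrange.interpolate Finset.univ id T, ?_, fun i => ?_⟩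
    · have := Lagrange.degree_interpolate_lt (s := Finset.univ) (v := id) T
        (Function.injective_id.injOn)
      rw [Finset.card_univ, ZMod.card] at this
      by_cases hz : Lagrange.interpolate Finset.univ id T = 0
      · rw [hz, natDegree_zero]
        exact hpp.pos
      · exact (natDegree_lt_iff_degree_lt hz).2 this
    · exact Lagrange.eval_interpolate_at_node (v := id) T Function.injective_id.injOn
        (Finset.mem_univ i)
  by_cases hr1 : f.natDegree ≤ 1
  · obtain ⟨a, b, hab⟩ := exists_eq_X_add_C_of_natDegree_le_one hr1
    exact ⟨a, b, fun i => by rw [← hf, hab]; simp⟩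
  exfalso
  obtain ⟨w, hw1, hwD, hwne, hwz⟩ := exists_first_power_sum D h0 hne
  set r := f.natDegree with hr
  set m := (p - 1) / r with hm
  -- The largest multiple `m * r` of `r` below `p` exceeds `(p - 1) / 2`, hence is at least `w`.
  have hmrlt : m * r < p := by
    have : m * r ≤ p - 1 := Nat.div_mul_le_self (p - 1) r
    have := hpp.pos
    omega
  have hwmr : w ≤ m * r := by
    have h1 : p - 1 < r * m + r := by
      have := Nat.lt_mul_div_succ (p - 1) (show 0 < r by omega)
      rwa [mul_add, mul_one] at this
    have h2 : 1 ≤ m := (Nat.one_le_div_iff (by omega)).2 (by omega)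
    have h3 : r ≤ m * r := Nat.le_mul_of_pos_left r h2
    rw [mul_comm r m] at h1
    omega
  have hsum : ∀ i, ∑ d ∈ D, T (i + d) ^ m = ∑ d ∈ D, (T i + d) ^ m := by
    intro i
    have hinj : Set.InjOn (fun d => T (i + d) - T i) D := fun a _ b _ hab =>
      add_left_cancel (hT (sub_left_injective hab))
    have himg : D.image (fun d => T (i + d) - T i) = D :=
      Finset.eq_of_subset_of_card_le
        (Finset.image_subset_iff.2 fun d hd => hD i d hd) (Finset.card_image_of_injOn hinj).ge
    conv_rhs => rw [← himg, Finset.sum_image hinj]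
    simp
  have hgdeg : (f ^ m).natDegree = m * r := natDegree_pow f m
  have hpoly : ∑ d ∈ D, taylor d (f ^ m) = ∑ d ∈ D, (f + C d) ^ m := by
    rw [← sub_eq_zero]
    refine eq_zero_of_natDegree_lt_card_of_eval_eq_zero _ Function.injective_id (fun i => ?_) ?_
    · simp only [id, eval_sub, eval_finsetSum, taylor_eval, eval_pow, eval_add, eval_C, hf]
      rw [← hsum i]
      simp
    · rw [ZMod.card]
      refine lt_of_le_of_lt (natDegree_sub_le_of_le (m := m * r) (n := m * r) ?_ ?_)
        (by rwa [max_self])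
      · refine natDegree_sum_le_of_forall_le _ _ fun d _ => ?_
        rw [natDegree_taylor, hgdeg]
      · refine natDegree_sum_le_of_forall_le _ _ fun d _ => ?_
        rw [natDegree_pow, natDegree_add_C]
  have hcoeff := congrArg (fun q => coeff q (m * r - w)) hpoly
  simp only [finsetSum_coeff, taylor_coeff] at hcoeff
  rw [sum_eval_of_power_sums_zero D w hw1 hwz _
    ((natDegree_hasseDeriv_le _ _).trans (by rw [hgdeg]; omega))] at hcoeff
  have hrhs : ∑ d ∈ D, ((f + C d) ^ m).coeff (m * r - w)
      = D.card * (f ^ m).coeff (m * r - w) := by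
    have hexp : ∀ d : ZMod p, ((f + C d) ^ m).coeff (m * r - w)
        = ∑ j ∈ Finset.range (m + 1),
          ((f ^ (m - j)).coeff (m * r - w) * (m.choose j : ZMod p)) * d ^ j := by
      intro d
      rw [add_comm f, add_pow, finsetSum_coeff]
      refine Finset.sum_congr rfl fun j _ => ?_
      rw [← C_eq_natCast, ← C_pow, coeff_mul_C, coeff_C_mul]
      ring
    simp_rw [hexp]
    rw [Finset.sum_comm, Finset.sum_range_succ', Finset.sum_eq_zero]
    · simp
    · intro j hj
      have hjm := Finset.mem_range.1 hj
      rw [← Finset.mul_sum]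
      rcases lt_or_ge (j + 1) w with h | h
      · rw [hwz (j + 1) (by omega) h, mul_zero]
      · -- Here `deg f ^ (m - j - 1) ≤ m r - w r < m r - w`, because `r ≥ 2`.
        rw [coeff_eq_zero_of_natDegree_lt, zero_mul, zero_mul]
        rw [natDegree_pow, ← hr]
        obtain ⟨k, hk⟩ : ∃ k, m = j + 1 + k := ⟨m - (j + 1), by omega⟩
        have : m - (j + 1) = k := by omega
        rw [this]
        have h2 : m * r = (j + 1) * r + k * r := by rw [hk]; ring
        have h3 : (j + 1) * 2 ≤ (j + 1) * r := Nat.mul_le_mul_left _ (by omega)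
        omega
  rw [hrhs, hasseDeriv_coeff, hasseDeriv_coeff] at hcoeff
  simp only [zero_add, Nat.choose_self, Nat.cast_one, one_mul, add_eq_left] at hcoeff
  have hadd : w + (m * r - w) = m * r := by omega
  rw [hadd] at hcoeff
  refine mul_ne_zero (mul_ne_zero ?_ ?_) hwne hcoeff
  · rw [Ne, ZMod.natCast_eq_zero_iff]
    intro hdvd
    have h := (Nat.choose_mul_factorial_mul_factorial (Nat.sub_le (m * r) w))
    have : p ∣ (m * r).factorial := by
      rw [← h]
      exact Dvd.dvd.mul_right (Dvd.dvd.mul_right hdvd _) _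
    exact absurd ((hpp.dvd_factorial).1 this) (by omega)
  · rw [← hgdeg, coeff_natDegree, leadingCoeff_pow]
    refine pow_ne_zero _ (leadingCoeff_ne_zero.2 fun h => ?_)
    rw [h, natDegree_zero] at hr
    omega

/-! ### Cycles in groups of odd order -/

/-- A group of permutations of odd order contains no element interchanging two points. -/
lemma no_swap_of_odd {α : Type*} (K : Subgroup (Equiv.Perm α)) (hodd : Odd (Nat.card K))
    {g : Equiv.Perm α} (hg : g ∈ K) {a b : α} (hab : g a = b) (hba : g b = a) : a = b := by
  obtain ⟨k, hk⟩ := hodd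
  have h1 : g ^ (2 * k + 1) = 1 := by
    have := pow_card_eq_one' (x := (⟨g, hg⟩ : K))
    rw [hk] at this
    simpa using congrArg Subtype.val this
  have h2 : ∀ k : ℕ, (g ^ (2 * k)) b = b := by
    intro k
    rw [pow_mul]
    exact Equiv.Perm.pow_apply_eq_self_of_apply_eq_self (by simp [pow_two, hab, hba]) k
  have h3 : (g ^ (2 * k + 1)) a = b := by
    rw [pow_succ, Equiv.Perm.mul_apply, hab, h2]
  rw [h1] at h3
  exact h3

section
variable {α : Type*} [Fintype α] [DecidableEq α]

lemma support_eq_of_no_swap (K : Subgroup (Equiv.Perm α))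
    (hK : ∀ g ∈ K, ∀ a b, g a = b → g b = a → a = b)
    (s t : Equiv.Perm α) (hsK : s ∈ K) (htK : t ∈ K) (hs : s.IsCycle) (ht : t.IsCycle)
    (hcard : s.support.card = t.support.card) (hnd : ¬ Disjoint s.support t.support) :
    s.support = t.support := by
  by_contra hne
  obtain ⟨y, hys, hyt⟩ := Finset.not_disjoint_iff.1 hnd
  obtain ⟨x', hx's, hx't⟩ : ∃ x ∈ s.support, x ∉ t.support := by
    by_contra! h
    exact hne (Finset.eq_of_subset_of_card_le h hcard.ge)
  obtain ⟨x, hxt, hxs⟩ : ∃ x ∈ t.support, x ∉ s.support := by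
    by_contra! h
    exact hne (Finset.eq_of_subset_of_card_le h hcard.le).symm
  have hmove : ∀ {u : Equiv.Perm α}, u.IsCycle → ∀ {a b}, a ∈ u.support → b ∈ u.support →
      ∃ i : ℤ, (u ^ i) a = b := fun {u} hu {a b} ha hb =>
    hu.exists_zpow_eq (Equiv.Perm.mem_support.1 ha) (Equiv.Perm.mem_support.1 hb)
  have hfix : ∀ {u : Equiv.Perm α} {a} (i : ℤ), a ∉ u.support → (u ^ i) a = a :=
    fun i ha => Equiv.Perm.zpow_apply_eq_self_of_apply_eq_self
      (Equiv.Perm.notMem_support.1 ha) i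
  have hpres : ∀ {u : Equiv.Perm α} {a} (i : ℤ), a ∈ u.support → (u ^ i) a ∈ u.support :=
    fun i ha => Equiv.Perm.zpow_apply_mem_support.2 ha
  obtain ⟨i, hi⟩ := hmove ht hxt hyt
  obtain ⟨j, hj⟩ := hmove hs hys hx's
  set h : Equiv.Perm α := s ^ j * t ^ i with hh
  have hhK : h ∈ K := K.mul_mem (K.zpow_mem hsK j) (K.zpow_mem htK i)
  have hhx : h x = x' := by rw [hh, Equiv.Perm.mul_apply, hi, hj]
  have hhΩ : ∀ a ∈ s.support ∪ t.support, h a ∈ s.support ∪ t.support := by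
    have key : ∀ (u v : Equiv.Perm α) (i : ℤ), ∀ a ∈ u.support ∪ v.support,
        (u ^ i) a ∈ u.support ∪ v.support := by
      intro u v i a ha
      by_cases hau : a ∈ u.support
      · exact Finset.mem_union_left _ (hpres i hau)
      · rwa [hfix i hau]
    intro a ha
    rw [hh, Equiv.Perm.mul_apply]
    apply key
    rw [Finset.union_comm] at ha ⊢
    exact key _ _ _ _ ha
  obtain ⟨c, hcs, hct⟩ : ∃ c ∈ s.support, h c ∈ t.support := by
    by_contra! hcon
    have hdisj : Disjoint (s.support.image h) t.support := by
      rw [Finset.disjoint_left]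
      intro a ha
      obtain ⟨c, hc, rfl⟩ := Finset.mem_image.1 ha
      exact hcon c hc
    have hsub : s.support.image h ∪ t.support ⊆ (s.support ∪ t.support).erase x' := by
      intro a ha
      rw [Finset.mem_erase]
      rcases Finset.mem_union.1 ha with ha | ha
      · obtain ⟨c, hc, rfl⟩ := Finset.mem_image.1 ha
        refine ⟨fun hc' => hxs ?_, hhΩ c (Finset.mem_union_left _ hc)⟩
        rwa [← h.injective (hc'.trans hhx.symm)]
      · exact ⟨fun h' => hx't (h' ▸ ha), Finset.mem_union_right _ ha⟩
    have h1 := Finset.card_le_card hsub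
    rw [Finset.card_union_of_disjoint hdisj, Finset.card_image_of_injective _ h.injective,
      Finset.card_erase_of_mem (Finset.mem_union_left _ hx's)] at h1
    have h2 := Finset.card_union_le s.support t.support
    have h3 := Finset.card_pos.2 ⟨y, hys⟩
    omega
  -- `(x, x') ↦ (x, c) ↦ (x', h c) ↦ (x', x)`
  obtain ⟨k, hk⟩ := hmove hs hx's hcs
  obtain ⟨l, hl⟩ := hmove ht hct hxt
  have hsw := hK (t ^ l * h * s ^ k)
    (K.mul_mem (K.mul_mem (K.zpow_mem htK l) hhK) (K.zpow_mem hsK k)) x x'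
    (by rw [Equiv.Perm.mul_apply, hfix k hxs, Equiv.Perm.mul_apply, hhx, hfix l hx't])
    (by rw [Equiv.Perm.mul_apply, hk, Equiv.Perm.mul_apply, hl])
  exact hxs (hsw ▸ hx's)

lemma mem_zpowers_of_support_eq (p : ℕ) (hp : p.Prime) (K : Subgroup (Equiv.Perm α))
    (hK : ∀ g ∈ K, ∀ a b, g a = b → g b = a → a = b)
    (s t : Equiv.Perm α) (hsK : s ∈ K) (htK : t ∈ K) (hs : s.IsCycle)
    (hcard : s.support.card = p) (hst : s.support = t.support) :
    t ∈ Subgroup.zpowers s := by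
  have : Fact p.Prime := ⟨hp⟩
  obtain ⟨x0, hx0⟩ : s.support.Nonempty := Finset.card_pos.1 (hcard ▸ hp.pos)
  have hord : orderOf s = p := hs.orderOf.trans hcard
  -- `φ` labels the support by `ZMod p` so that `s` acts as `i ↦ i + 1`.
  set φ : ZMod p → α := fun i => (s ^ (i.cast : ℤ)) x0 with hφ
  have hφint : ∀ z : ℤ, φ (z : ZMod p) = (s ^ z) x0 := by
    intro z
    simp only [hφ]
    rw [ZMod.coe_intCast, ← hord, zpow_mod_orderOf]
  have hcast : ∀ i : ZMod p, ((i.cast : ℤ) : ZMod p) = i := fun i => ZMod.intCast_zmod_cast i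
  have hshift : ∀ (z : ℤ) (i : ZMod p), (s ^ z) (φ i) = φ (i + z) := by
    intro z i
    rw [← hcast i, hφint, ← Int.cast_add, hφint, add_comm, zpow_add, Equiv.Perm.mul_apply]
  have hφmem : ∀ i, φ i ∈ s.support := fun i => Equiv.Perm.zpow_apply_mem_support.2 hx0
  have hφsurj : ∀ a ∈ s.support, ∃ i, φ i = a := by
    intro a ha
    obtain ⟨z, hz⟩ := hs.exists_zpow_eq (Equiv.Perm.mem_support.1 hx0)
      (Equiv.Perm.mem_support.1 ha)
    exact ⟨z, (hφint z).trans hz⟩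
  have hφinj : Function.Injective φ := by
    have himg : Finset.univ.image φ = s.support := by
      ext a
      constructor
      · intro ha
        obtain ⟨i, -, rfl⟩ := Finset.mem_image.1 ha
        exact hφmem i
      · intro ha
        obtain ⟨i, rfl⟩ := hφsurj a ha
        exact Finset.mem_image_of_mem _ (Finset.mem_univ i)
    have : (Finset.univ.image φ).card = (Finset.univ : Finset (ZMod p)).card := by
      rw [himg, hcard, Finset.card_univ, ZMod.card]
    simpa [Set.injOn_univ] using Finset.card_image_iff.1 this
  have htφ : ∀ i, ∃ k, φ k = t (φ i) := fun i => hφsurj _ (by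
    rw [hst, Equiv.Perm.apply_mem_support, ← hst]
    exact hφmem i)
  choose T hT using htφ
  have hTinj : Function.Injective T := fun i j hij => hφinj (t.injective (by
    rw [← hT, ← hT, hij]))
  classical
  -- `D` is the `K`-suborbit of `1` at the point `0`, in terms of the labels.
  set D : Finset (ZMod p) :=
    Finset.univ.filter fun d => ∃ g ∈ K, g (φ 0) = φ 0 ∧ g (φ 1) = φ d with hDdef
  have hmemD : ∀ d, d ∈ D ↔ ∃ g ∈ K, g (φ 0) = φ 0 ∧ g (φ 1) = φ d := fun d => by
    simp [hDdef]
  have h0 : (0 : ZMod p) ∉ D := by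
    rw [hmemD]
    rintro ⟨g, -, h1, h2⟩
    exact zero_ne_one (hφinj (g.injective (h1.trans h2.symm)))
  have hne : D.Nonempty := ⟨1, (hmemD 1).2 ⟨1, K.one_mem, rfl, rfl⟩⟩
  have hneg : ∀ d ∈ D, -d ∉ D := by
    intro d hd hd'
    obtain ⟨g, hg, hg0, hg1⟩ := (hmemD d).1 hd
    obtain ⟨k, hk, hk0, hk1⟩ := (hmemD _).1 hd'
    have hgi0 : g⁻¹ (φ 0) = φ 0 := Equiv.Perm.inv_eq_iff_eq.2 hg0.symm
    have hgi1 : g⁻¹ (φ d) = φ 1 := Equiv.Perm.inv_eq_iff_eq.2 hg1.symm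
    have := hK (s ^ (d.cast : ℤ) * k * g⁻¹)
      (K.mul_mem (K.mul_mem (K.zpow_mem hsK _) hk) (K.inv_mem hg)) (φ 0) (φ d)
      (by rw [Equiv.Perm.mul_apply, hgi0, Equiv.Perm.mul_apply, hk0, hshift, hcast, zero_add])
      (by rw [Equiv.Perm.mul_apply, hgi1, Equiv.Perm.mul_apply, hk1, hshift, hcast,
        neg_add_cancel])
    exact h0 (hφinj this ▸ hd)
  have hDcard : 2 * D.card < p := by
    have hdisj : Disjoint D (D.image Neg.neg) := by
      rw [Finset.disjoint_left]
      intro a ha ha'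
      obtain ⟨b, hb, rfl⟩ := Finset.mem_image.1 ha'
      exact hneg b hb ha
    have hsub : D ∪ D.image Neg.neg ⊆ Finset.univ.erase 0 := by
      intro a ha
      refine Finset.mem_erase.2 ⟨?_, Finset.mem_univ _⟩
      rintro rfl
      rcases Finset.mem_union.1 ha with ha | ha
      · exact h0 ha
      · obtain ⟨b, hb, hb0⟩ := Finset.mem_image.1 ha
        exact h0 (neg_eq_zero.1 hb0 ▸ hb)
    have h1 := Finset.card_le_card hsub
    rw [Finset.card_union_of_disjoint hdisj, Finset.card_image_of_injective _ neg_injective,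
      Finset.card_erase_of_mem (Finset.mem_univ _), Finset.card_univ, ZMod.card] at h1
    have := hp.pos
    omega
  have hDT : ∀ i, ∀ d ∈ D, T (i + d) - T i ∈ D := by
    intro i d hd
    obtain ⟨g, hg, hg0, hg1⟩ := (hmemD d).1 hd
    refine (hmemD _).2 ⟨s ^ (-(T i).cast : ℤ) * t * s ^ (i.cast : ℤ) * g,
      K.mul_mem (K.mul_mem (K.mul_mem (K.zpow_mem hsK _) htK) (K.zpow_mem hsK _)) hg, ?_, ?_⟩
    · simp only [Equiv.Perm.mul_apply]
      rw [hg0, hshift, ← hT, hshift, Int.cast_neg, hcast, hcast, zero_add, add_neg_cancel]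
    · simp only [Equiv.Perm.mul_apply]
      rw [hg1, hshift, ← hT, hshift, Int.cast_neg, hcast, hcast, add_comm d, ← sub_eq_add_neg]
  obtain ⟨a, b, hab⟩ := affine_of_preserves_differences p T hTinj D h0 hne hDcard hDT
  have hnofix : ∀ i, T i ≠ i := by
    intro i hi
    have h1 := hT i
    rw [hi] at h1
    have h2 := hφmem i
    rw [hst] at h2
    exact Equiv.Perm.mem_support.1 h2 h1.symm
  have ha : a = 1 := by
    by_contra ha
    have ha' : 1 - a ≠ 0 := sub_ne_zero.2 (Ne.symm ha)
    apply hnofix (b / (1 - a))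
    rw [hab]
    field_simp
    ring
  refine Subgroup.mem_zpowers_iff.2 ⟨(b.cast : ℤ), ?_⟩
  ext x
  by_cases hx : x ∈ s.support
  · obtain ⟨i, rfl⟩ := hφsurj x hx
    rw [hshift, hcast, ← hT, hab, ha, one_mul]
  · rw [Equiv.Perm.zpow_apply_eq_self_of_apply_eq_self (Equiv.Perm.notMem_support.1 hx)]
    rw [hst] at hx
    exact (Equiv.Perm.notMem_support.1 hx).symm

end

/-- Proposition: let `K ≤ Aₙ` be a subgroup of odd order, `p` a prime, and `s, t ∈ K` two
`p`-cycles. Then either the supports of `s` and `t` are disjoint or `⟨s⟩ = ⟨t⟩`; in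
particular `s` and `t` commute. -/
theorem p_cycles_in_odd_subgroup_disjoint_or_generate_same
    (n p : ℕ) (hp : p.Prime)
    (K : Subgroup (Equiv.Perm (Fin n))) (hKA : K ≤ alternatingGroup (Fin n))
    (hodd : Odd (Nat.card K))
    (s t : Equiv.Perm (Fin n)) (hsK : s ∈ K) (htK : t ∈ K)
    (hs : s.IsCycle) (hssupp : s.support.card = p)
    (ht : t.IsCycle) (htsupp : t.support.card = p) :
    (Disjoint s.support t.support ∨ Subgroup.zpowers s = Subgroup.zpowers t) ∧
      Commute s t := by
  have hK : ∀ g ∈ K, ∀ a b, g a = b → g b = a → a = b :=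
    fun g hg a b hab hba => no_swap_of_odd K hodd hg hab hba
  by_cases hd : Disjoint s.support t.support
  · exact ⟨Or.inl hd, (Equiv.Perm.disjoint_iff_disjoint_support.2 hd).commute⟩
  · have hst := support_eq_of_no_swap K hK s t hsK htK hs ht (hssupp.trans htsupp.symm) hd
    have h1 := mem_zpowers_of_support_eq p hp K hK s t hsK htK hs hssupp hst
    have h2 := mem_zpowers_of_support_eq p hp K hK t s htK hsK ht htsupp hst.symm
    refine ⟨Or.inr (le_antisymm ?_ ?_), ?_⟩
    · rwa [Subgroup.zpowers_le]
    · rwa [Subgroup.zpowers_le]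
    · obtain ⟨z, rfl⟩ := Subgroup.mem_zpowers_iff.1 h1
      exact (Commute.refl s).zpow_right z
end
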